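/- Let n ≥ 2 and let Γ ⊆ ℝⁿ be a convex invariant cone, and let f be a concave elliptic Hessian operator on Γ satisfying condition N with constants N₁, N₂ > 0. Let Ω ⊂ ℝⁿ be a bounded domain and let u be a smooth admissible function on Ω, continuous up to the boundary, solving F(D²u) = 1 in Ω with u = 0 on ∂Ω. Assume moreover that u satisfies condition D with constants D₁, D₂ > 0. Then there exist constants α > 0, β > 0 and C > 0, depending only on f, N₁, N₂, D₁, D₂ and diam(Ω), such that sup_Ω ( (−u) + (−u)^α |Du| + (−u)^β |D²u| ) ≤ C. -/

import Mathlib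

open scoped BigOperators

noncomputable section

/-- The positive orthant `Γₙ = (0,∞)ⁿ` in `ℝⁿ`. -/
def PosOrthant (n : ℕ) : Set (Fin n → ℝ) := {lam | ∀ i, 0 < lam i}

/-- A convex invariant cone: an open cone `Γ ⊆ ℝⁿ` with vertex at the origin, `Γ ≠ ℝⁿ`,
which is convex, satisfies `Γ + Γₙ ⊆ Γ`, and is invariant under permutations of coordinates. -/
def IsConvexInvariantCone {n : ℕ} (Γ : Set (Fin n → ℝ)) : Prop :=
  IsOpen Γ ∧ Γ ≠ Set.univ ∧ Convex ℝ Γ ∧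
    (∀ lam ∈ Γ, ∀ t : ℝ, 0 < t → t • lam ∈ Γ) ∧
    (∀ lam ∈ Γ, ∀ tau ∈ PosOrthant n, lam + tau ∈ Γ) ∧
    (∀ lam ∈ Γ, ∀ σ : Equiv.Perm (Fin n), lam ∘ σ ∈ Γ)

/-- The partial derivative `∂f/∂λᵢ(λ)`. -/
def fpd {n : ℕ} (f : (Fin n → ℝ) → ℝ) (i : Fin n) (lam : Fin n → ℝ) : ℝ :=
  fderiv ℝ f lam (Pi.single i 1)

/-- A concave elliptic Hessian operator on a convex invariant cone `Γ`:
a `C²`, permutation-invariant, concave function `f` on `Γ` which is elliptic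
(`∂f/∂λᵢ > 0`), positive, and positively homogeneous of degree one. -/
def IsConcaveEllipticHessianOp {n : ℕ} (Γ : Set (Fin n → ℝ)) (f : (Fin n → ℝ) → ℝ) : Prop :=
  ContDiffOn ℝ 2 f Γ ∧ ConcaveOn ℝ Γ f ∧
    (∀ lam ∈ Γ, ∀ σ : Equiv.Perm (Fin n), f (lam ∘ σ) = f lam) ∧
    (∀ lam ∈ Γ, ∀ i, 0 < fpd f i lam) ∧
    (∀ lam ∈ Γ, 0 < f lam) ∧
    (∀ lam ∈ Γ, ∀ t : ℝ, 0 < t → f (t • lam) = t * f lam)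

/-- Condition N: whenever `λ ∈ Γ` satisfies `f(λ) = 1` and `Σᵢ ∂f/∂λᵢ(λ) ≤ C` for some `C > 0`,
then `∂f/∂λᵢ(λ) ≥ 1/(N₁ C^{N₂})` for every `i`. -/
def ConditionN {n : ℕ} (Γ : Set (Fin n → ℝ)) (f : (Fin n → ℝ) → ℝ) (N₁ N₂ : ℝ) : Prop :=
  ∀ lam ∈ Γ, f lam = 1 → ∀ C : ℝ, 0 < C → (∑ i, fpd f i lam) ≤ C →
    ∀ i, 1 / (N₁ * C ^ N₂) ≤ fpd f i lam

/-- The Hessian matrix `D²u(x)`. -/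
def hessianMatrix {n : ℕ} (u : EuclideanSpace ℝ (Fin n) → ℝ) (x : EuclideanSpace ℝ (Fin n)) :
    Matrix (Fin n) (Fin n) ℝ :=
  fun i j => iteratedFDeriv ℝ 2 u x ![EuclideanSpace.single i 1, EuclideanSpace.single j 1]

/-- The vector of eigenvalues `λ(D²u(x))` of the Hessian of `u` at `x`
(junk value `0` if the Hessian matrix fails to be symmetric). -/
def hessEigen {n : ℕ} (u : EuclideanSpace ℝ (Fin n) → ℝ) (x : EuclideanSpace ℝ (Fin n)) :
    Fin n → ℝ :=
  if h : (hessianMatrix u x).IsHermitian then h.eigenvalues else 0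

/-- Condition D for a solution `u` of `F(D²u) = 1` on a set `Ω`: at every point, if an
eigenvalue `λᵢ` of `D²u` exceeds `D₁` then `∂f/∂λᵢ(λ) ⬝ λᵢ ≤ D₂`. -/
def ConditionD {n : ℕ} (f : (Fin n → ℝ) → ℝ) (u : EuclideanSpace ℝ (Fin n) → ℝ)
    (Ω : Set (EuclideanSpace ℝ (Fin n))) (D₁ D₂ : ℝ) : Prop :=
  ∀ x ∈ Ω, ∀ i, D₁ < hessEigen u x i →
    fpd f i (hessEigen u x) * hessEigen u x i ≤ D₂

/-- The `k`-th elementary symmetric polynomial `σ_k` on `ℝⁿ`. -/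
def esymmF (n k : ℕ) (lam : Fin n → ℝ) : ℝ :=
  ∑ s ∈ (Finset.univ : Finset (Fin n)).powersetCard k, ∏ i ∈ s, lam i

/-- The Gårding cone `Γ_k = {λ : σ_j(λ) > 0, j = 1,…,k}`. -/
def GammaK (n k : ℕ) : Set (Fin n → ℝ) :=
  {lam | ∀ j : ℕ, 1 ≤ j → j ≤ k → 0 < esymmF n j lam}

/-- The cone `Γ̂_p` of vectors all of whose sums of `p` distinct coordinates are positive. -/
def GammaHat (n p : ℕ) : Set (Fin n → ℝ) :=
  {lam | ∀ s : Finset (Fin n), s.card = p → 0 < ∑ i ∈ s, lam i}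

/-- The `p`-Monge–Ampère operator `M_p(λ) = ∏_{i₁<⋯<i_p} (λ_{i₁} + ⋯ + λ_{i_p})`. -/
def pMA (n p : ℕ) (lam : Fin n → ℝ) : ℝ :=
  ∏ s ∈ (Finset.univ : Finset (Fin n)).powersetCard p, ∑ i ∈ s, lam i

/-- Quadratic growth: `u(x) ≥ C⁻¹|x|² − C` for some `C > 0`. -/
def QuadraticGrowth {n : ℕ} (u : EuclideanSpace ℝ (Fin n) → ℝ) : Prop :=
  ∃ C : ℝ, 0 < C ∧ ∀ x, C⁻¹ * ‖x‖ ^ 2 - C ≤ u x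

/-- `u` is a quadratic polynomial: `u(x) = ½ xᵀAx + b·x + c` with `A` symmetric. -/
def IsQuadraticPolynomial {n : ℕ} (u : EuclideanSpace ℝ (Fin n) → ℝ) : Prop :=
  ∃ (A : Matrix (Fin n) (Fin n) ℝ) (b : Fin n → ℝ) (c : ℝ), A.IsSymm ∧
    ∀ x, u x = (1 / 2) * (∑ i, ∑ j, A i j * x i * x j) + (∑ i, b i * x i) + c

/-!
Everything comes from the linearized operator `L w = ∑ Fᵢ w_{ii}` in an eigenframe of `D²u`. By
homogeneity `L u = 1` and by concavity `∑ Fᵢ ≥ f(1, …, 1) > 0`, so comparing `u` with a constant and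
with a multiple of `|x|²` gives `u < 0` and bounds `-u`. The `Fᵢ` are ordered oppositely to the
eigenvalues, so `L u = 1` and condition D bound the eigenvalues from below.

The gradient and Hessian bounds come from the maximum of `(-u - ε)^α ψ exp (A |· - z|² / 2)` with
`ψ = |Du|` and `ψ = |D²u|`. There the norm is replaced by a smooth function touching it from below,
`∂_w u` resp. `∂_p ∂_p u` with `p` the top eigendirection. For small `A`, the term `A ∑ Fᵢ` produced
by the exponential absorbs the error terms of a direction `i` except when `∂ᵢ u` is large.
For the gradient, the critical point equation then makes `λᵢ` large, and condition D applies. For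
the Hessian, condition D in the direction `p` suffices if `Fᵢ ≤ 4 F_p`; otherwise concavity helps,
used as the statement that `t ↦ ∑ Fᵢ D²u(x + tq)(vᵢ(t), vᵢ(t))` is minimal at `t = 0` for every
orthonormal frame `vᵢ(t)` starting at the eigenframe: rotating in the planes `(i, p)` yields the
good third-order terms without differentiating `f` twice. Condition N finally converts a bound for
`(-u) ∑ Fᵢ` into one for the largest eigenvalue.
-/

open Filter Topology
open scoped RealInnerProductSpace

section TwoJet

variable {F G : Type*} [NormedAddCommGroup F] [NormedSpace ℝ F]
  [NormedAddCommGroup G] [NormedSpace ℝ G]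

/-- The curve `g` is differentiable near `0` and has the second-order Taylor data
`g 0 = a`, `g' 0 = b`, `g'' 0 = c`. -/
def HasTwoJet (g : ℝ → F) (a b c : F) : Prop :=
  g 0 = a ∧ ∃ g' : ℝ → F, (∀ᶠ t in 𝓝 0, HasDerivAt g (g' t) t) ∧ g' 0 = b ∧ HasDerivAt g' c 0

namespace HasTwoJet

variable {g h : ℝ → F} {a b c a' b' c' : F}

theorem const (a : F) : HasTwoJet (fun _ ↦ a) a 0 0 :=
  ⟨rfl, fun _ ↦ 0, .of_forall fun t ↦ hasDerivAt_const t a, rfl, hasDerivAt_const _ _⟩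

theorem line (x v : F) : HasTwoJet (fun t : ℝ ↦ x + t • v) x v 0 :=
  ⟨by simp, fun _ ↦ v, .of_forall fun t ↦ by
    simpa using ((hasDerivAt_id t).smul_const v).const_add x, rfl, hasDerivAt_const _ _⟩

theorem add (hg : HasTwoJet g a b c) (hh : HasTwoJet h a' b' c') :
    HasTwoJet (fun t ↦ g t + h t) (a + a') (b + b') (c + c') := by
  obtain ⟨rfl, g', hg', rfl, hg''⟩ := hg
  obtain ⟨rfl, h', hh', rfl, hh''⟩ := hh
  refine ⟨rfl, fun t ↦ g' t + h' t, ?_, rfl, hg''.add hh''⟩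
  filter_upwards [hg', hh'] with t ht kt using ht.add kt

theorem sum {ι : Type*} (s : Finset ι) {g : ι → ℝ → F} {a b c : ι → F}
    (hg : ∀ i, HasTwoJet (g i) (a i) (b i) (c i)) :
    HasTwoJet (fun t ↦ ∑ i ∈ s, g i t) (∑ i ∈ s, a i) (∑ i ∈ s, b i) (∑ i ∈ s, c i) := by
  classical
  induction s using Finset.induction_on with
  | empty => simpa using const 0
  | insert i s hi ih =>
    simp only [Finset.sum_insert hi]
    exact (hg i).add ih

theorem const_mul {g : ℝ → ℝ} {a b c : ℝ} (r : ℝ) (hg : HasTwoJet g a b c) :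
    HasTwoJet (fun t ↦ r * g t) (r * a) (r * b) (r * c) := by
  obtain ⟨rfl, g', hg', rfl, hg''⟩ := hg
  exact ⟨rfl, fun t ↦ r * g' t, hg'.mono fun t ht ↦ ht.const_mul r, rfl, hg''.const_mul r⟩

theorem clm_apply {L : ℝ → F →L[ℝ] G} {L₀ L₁ L₂ : F →L[ℝ] G}
    (hL : HasTwoJet L L₀ L₁ L₂) (hg : HasTwoJet g a b c) :
    HasTwoJet (fun t ↦ L t (g t)) (L₀ a) (L₁ a + L₀ b) (L₂ a + 2 • L₁ b + L₀ c) := by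
  obtain ⟨rfl, L', hL', rfl, hL''⟩ := hL
  obtain ⟨rfl, g', hg', rfl, hg''⟩ := hg
  refine ⟨rfl, fun t ↦ L' t (g t) + L t (g' t), ?_, rfl, ?_⟩
  · filter_upwards [hL', hg'] with t ht kt using ht.clm_apply kt
  · refine ((hL''.clm_apply hg'.self_of_nhds).add
      (hL'.self_of_nhds.clm_apply hg'')).congr_deriv ?_
    rw [two_smul]
    abel

theorem norm_sq {H : Type*} [NormedAddCommGroup H] [InnerProductSpace ℝ H] {g : ℝ → H}
    {a b c : H} (hg : HasTwoJet g a b c) :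
    HasTwoJet (fun t ↦ ‖g t‖ ^ 2) (‖a‖ ^ 2) (2 * ⟪a, b⟫) (2 * (‖b‖ ^ 2 + ⟪a, c⟫)) := by
  obtain ⟨rfl, g', hg', rfl, hg''⟩ := hg
  refine ⟨rfl, fun t ↦ 2 * ⟪g t, g' t⟫, hg'.mono fun t ht ↦ ht.norm_sq, rfl, ?_⟩
  refine ((hg'.self_of_nhds.inner ℝ hg'').const_mul 2).congr_deriv ?_
  rw [real_inner_self_eq_norm_sq]
  ring

theorem log {g : ℝ → ℝ} {a b c : ℝ} (hg : HasTwoJet g a b c) (ha : 0 < a) :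
    HasTwoJet (fun t ↦ Real.log (g t)) (Real.log a) (b / a) (c / a - (b / a) ^ 2) := by
  obtain ⟨rfl, g', hg', rfl, hg''⟩ := hg
  have hpos : ∀ᶠ t in 𝓝 (0 : ℝ), 0 < g t :=
    hg'.self_of_nhds.continuousAt.eventually (lt_mem_nhds ha)
  refine ⟨rfl, fun t ↦ g' t / g t, ?_, rfl, ?_⟩
  · filter_upwards [hg', hpos] with t ht pt using ht.log pt.ne'
  · refine (hg''.div hg'.self_of_nhds ha.ne').congr_deriv ?_
    field_simp

theorem deriv_eq_zero_and_nonneg_of_isLocalMin {g : ℝ → ℝ} {a b c : ℝ}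
    (hg : HasTwoJet g a b c) (hmin : IsLocalMin g 0) : b = 0 ∧ 0 ≤ c := by
  obtain ⟨rfl, g', hg', rfl, hg''⟩ := hg
  have hb : g' 0 = 0 := hmin.hasDerivAt_eq_zero hg'.self_of_nhds
  refine ⟨hb, le_of_not_gt fun hc ↦ ?_⟩
  have hderiv : deriv g =ᶠ[𝓝 0] g' := hg'.mono fun t ht ↦ ht.deriv
  have hderiv₂ : deriv (deriv g) 0 = c := by rw [hderiv.deriv_eq, hg''.deriv]
  -- If `c < 0`, then `0` is also a local maximum, so `g` is constant near `0`.
  have hmax : IsLocalMax g 0 := isLocalMax_of_deriv_deriv_neg (hderiv₂ ▸ hc)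
    (hderiv.self_of_nhds.trans hb) hg'.self_of_nhds.continuousAt
  have hconst : g =ᶠ[𝓝 0] fun _ ↦ g 0 := by
    filter_upwards [hmin, hmax] with t h₁ h₂ using le_antisymm h₂ h₁
  have hzero : deriv (deriv g) 0 = 0 := by simp [hconst.deriv.deriv_eq]
  exact hc.ne (hderiv₂ ▸ hzero)

theorem deriv_eq_zero_and_nonpos_of_isLocalMax {g : ℝ → ℝ} {a b c : ℝ}
    (hg : HasTwoJet g a b c) (hmax : IsLocalMax g 0) : b = 0 ∧ c ≤ 0 := by
  have h := (hg.const_mul (-1)).deriv_eq_zero_and_nonneg_of_isLocalMin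
    (by simpa using hmax.neg)
  constructor <;> linarith [h.1, h.2]

end HasTwoJet

end TwoJet

/-- The derivative `∂[v] g` of `g` in the direction `v`, as a function of the base point. -/
def dirDeriv {E F : Type*} [NormedAddCommGroup E] [NormedSpace ℝ E] [NormedAddCommGroup F]
    [NormedSpace ℝ F] (v : E) (g : E → F) (x : E) : F := fderiv ℝ g x v

local notation "∂[" v "]" => dirDeriv v

section DirectionalDerivative

variable {E F G : Type*} [NormedAddCommGroup E] [NormedSpace ℝ E]
  [NormedAddCommGroup F] [NormedSpace ℝ F] [NormedAddCommGroup G] [NormedSpace ℝ G]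

/-- The Hessian of `u` at `x`, as a bilinear form. -/
def hess (u : E → ℝ) (x : E) : E →L[ℝ] E →L[ℝ] ℝ := fderiv ℝ (fderiv ℝ u) x

variable {Ω : Set E} {g : E → F} {u : E → ℝ} {x : E}

theorem contDiffOn_dirDeriv {k m : WithTop ℕ∞} (hΩ : IsOpen Ω) (hg : ContDiffOn ℝ k g Ω)
    (hmk : m + 1 ≤ k) (v : E) : ContDiffOn ℝ m (∂[v] g) Ω :=
  (hg.fderiv_of_isOpen hΩ hmk).clm_apply contDiffOn_const

theorem contDiffOn_hess {k m : WithTop ℕ∞} (hΩ : IsOpen Ω) (hu : ContDiffOn ℝ k u Ω)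
    (hmk : m + 1 + 1 ≤ k) : ContDiffOn ℝ m (hess u) Ω :=
  (hu.fderiv_of_isOpen hΩ hmk).fderiv_of_isOpen hΩ le_rfl

theorem dirDeriv_congr (hΩ : IsOpen Ω) {h : E → F} (hgh : Set.EqOn g h Ω) (v : E) :
    Set.EqOn (∂[v] g) (∂[v] h) Ω := fun x hx ↦ by
  simp only [dirDeriv, (hgh.eventuallyEq_of_mem (hΩ.mem_nhds hx)).fderiv_eq]

theorem dirDeriv_clm_apply {L : E → F →L[ℝ] G} (hL : DifferentiableAt ℝ L x) (q : E) (w : F) :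
    ∂[q] (fun y ↦ L y w) x = ∂[q] L x w := by
  simp [dirDeriv, fderiv_clm_apply hL (differentiableAt_const w)]

theorem dirDeriv_dirDeriv_eq_fderiv_fderiv (hΩ : IsOpen Ω) (hg : ContDiffOn ℝ 2 g Ω)
    (hx : x ∈ Ω) (v w : E) : ∂[v] (∂[w] g) x = fderiv ℝ (fderiv ℝ g) x v w :=
  dirDeriv_clm_apply (((hg.fderiv_of_isOpen hΩ one_add_one_eq_two.le).differentiableOn
    one_ne_zero).differentiableAt (hΩ.mem_nhds hx)) v w

theorem dirDeriv_comm (hΩ : IsOpen Ω) (hg : ContDiffOn ℝ 2 g Ω) (v w : E) :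
    Set.EqOn (∂[v] (∂[w] g)) (∂[w] (∂[v] g)) Ω := fun x hx ↦ by
  simp only [dirDeriv_dirDeriv_eq_fderiv_fderiv hΩ hg hx]
  exact ((hg.contDiffAt (hΩ.mem_nhds hx)).isSymmSndFDerivAt (by simp)) v w

theorem hess_symm (hΩ : IsOpen Ω) (hu : ContDiffOn ℝ 2 u Ω) (hx : x ∈ Ω) (v w : E) :
    hess u x v w = hess u x w v :=
  ((hu.contDiffAt (hΩ.mem_nhds hx)).isSymmSndFDerivAt (by simp)) v w

theorem dirDeriv_hess_apply (hΩ : IsOpen Ω) (hu : ContDiffOn ℝ 3 u Ω) (q v w : E) :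
    Set.EqOn (fun y ↦ ∂[q] (hess u) y v w) (∂[q] (∂[v] (∂[w] u))) Ω := fun y hy ↦ by
  have hH : DifferentiableAt ℝ (hess u) y := ((contDiffOn_hess (m := 1) hΩ hu
    (by norm_num)).differentiableOn one_ne_zero).differentiableAt (hΩ.mem_nhds hy)
  have hHv : DifferentiableAt ℝ (fun z ↦ hess u z v) y := hH.clm_apply (by fun_prop)
  beta_reduce
  rw [← dirDeriv_clm_apply hH, ← dirDeriv_clm_apply hHv]
  exact dirDeriv_congr hΩ (fun z hz ↦ (dirDeriv_dirDeriv_eq_fderiv_fderiv hΩ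
    (hu.of_le (by norm_num)) hz v w).symm) q hy

theorem dirDeriv_dirDeriv_hess_apply (hΩ : IsOpen Ω) (hu : ContDiffOn ℝ 4 u Ω) (hx : x ∈ Ω)
    (p q v w : E) : ∂[p] (∂[q] (hess u)) x v w = ∂[p] (∂[q] (∂[v] (∂[w] u))) x := by
  have hH : DifferentiableAt ℝ (∂[q] (hess u)) x :=
    ((contDiffOn_dirDeriv (m := 1) hΩ (contDiffOn_hess (m := 2) hΩ hu (by norm_num))
      (by norm_num) q).differentiableOn one_ne_zero).differentiableAt (hΩ.mem_nhds hx)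
  have hHv : DifferentiableAt ℝ (fun z ↦ ∂[q] (hess u) z v) x := hH.clm_apply (by fun_prop)
  rw [← dirDeriv_clm_apply hH, ← dirDeriv_clm_apply hHv]
  exact dirDeriv_congr hΩ (dirDeriv_hess_apply hΩ (hu.of_le (by norm_num)) q v w) p hx

theorem dirDeriv₃_rotate (hΩ : IsOpen Ω) (hg : ContDiffOn ℝ 3 g Ω) (q v w : E) :
    Set.EqOn (∂[q] (∂[v] (∂[w] g))) (∂[v] (∂[w] (∂[q] g))) Ω := fun x hx ↦ by
  rw [dirDeriv_comm hΩ (contDiffOn_dirDeriv hΩ hg (by norm_num) w) q v hx,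
    dirDeriv_congr hΩ (dirDeriv_comm hΩ (hg.of_le (by norm_num)) q w) v hx]

theorem dirDeriv₄_rotate (hΩ : IsOpen Ω) (hg : ContDiffOn ℝ 4 g Ω) (hx : x ∈ Ω) (p q v w : E) :
    ∂[p] (∂[q] (∂[v] (∂[w] g))) x = ∂[v] (∂[w] (∂[p] (∂[q] g))) x := by
  rw [dirDeriv_congr hΩ (dirDeriv₃_rotate hΩ (hg.of_le (by norm_num)) q v w) p hx,
    dirDeriv₃_rotate hΩ (contDiffOn_dirDeriv hΩ hg (by norm_num) q) p v w hx]

theorem hasDerivAt_comp_line (x v : E) {t : ℝ} (hg : DifferentiableAt ℝ g (x + t • v)) :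
    HasDerivAt (fun s : ℝ ↦ g (x + s • v)) (∂[v] g (x + t • v)) t :=
  hg.hasFDerivAt.comp_hasDerivAt t
    (by simpa using ((hasDerivAt_id t).smul_const v).const_add x)

theorem eventually_line_mem (hΩ : IsOpen Ω) (hx : x ∈ Ω) (v : E) :
    ∀ᶠ t in 𝓝 (0 : ℝ), x + t • v ∈ Ω := by
  have hcont : ContinuousAt (fun t : ℝ ↦ x + t • v) 0 := by fun_prop
  exact hcont.eventually (by simpa using hΩ.mem_nhds hx)

theorem hasTwoJet_comp_line (hΩ : IsOpen Ω) (hg : ContDiffOn ℝ 2 g Ω) (hx : x ∈ Ω) (v : E) :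
    HasTwoJet (fun t : ℝ ↦ g (x + t • v)) (g x) (∂[v] g x) (∂[v] (∂[v] g) x) := by
  have hdiff {h : E → F} (hh : ContDiffOn ℝ 1 h Ω) {y : E} (hy : y ∈ Ω) :
      DifferentiableAt ℝ h y :=
    (hh.differentiableOn one_ne_zero).differentiableAt (hΩ.mem_nhds hy)
  refine ⟨by simp, fun t ↦ ∂[v] g (x + t • v), ?_, by simp, ?_⟩
  · filter_upwards [eventually_line_mem hΩ hx v] with t ht
    exact hasDerivAt_comp_line x v (hdiff (hg.of_le one_le_two) ht)
  · have hg' := contDiffOn_dirDeriv hΩ hg one_add_one_eq_two.le v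
    simpa using hasDerivAt_comp_line x v (t := 0) (hdiff hg' (by simpa using hx))

end DirectionalDerivative

section LinearizedEquation

variable {E : Type*} [NormedAddCommGroup E] [InnerProductSpace ℝ E]

section Skew

variable [CompleteSpace E] {A : E →L[ℝ] E}

theorem inner_apply_left_of_mem_skewAdjoint (hA : A ∈ skewAdjoint (E →L[ℝ] E)) (v w : E) :
    ⟪A v, w⟫ = -⟪v, A w⟫ := by
  rw [← ContinuousLinearMap.adjoint_inner_right, ← ContinuousLinearMap.star_eq_adjoint,
    skewAdjoint.mem_iff.mp hA, neg_apply, inner_neg_right]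

theorem orthonormal_exp_smul_apply {ι : Type*} (hA : A ∈ skewAdjoint (E →L[ℝ] E)) {v : ι → E}
    (hv : Orthonormal ℝ v) (t : ℝ) : Orthonormal ℝ fun i ↦ NormedSpace.exp (t • A) (v i) := by
  let := NormedAlgebra.restrictScalars ℚ ℝ (E →L[ℝ] E)
  have hU : NormedSpace.exp (t • A) ∈ unitary (E →L[ℝ] E) :=
    NormedSpace.exp_mem_unitary_of_mem_skewAdjoint (skewAdjoint.smul_mem t hA)
  classical
  rw [orthonormal_iff_ite] at hv ⊢
  intro i j
  rw [ContinuousLinearMap.inner_map_map_of_mem_unitary hU, hv]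

theorem hasTwoJet_exp_smul_apply (A : E →L[ℝ] E) (v : E) :
    HasTwoJet (fun t : ℝ ↦ NormedSpace.exp (t • A) v) v (A v) (A (A v)) := by
  have hderiv (t : ℝ) : HasDerivAt (fun s : ℝ ↦ NormedSpace.exp (s • A) v)
      (A (NormedSpace.exp (t • A) v)) t := by
    simpa using (hasDerivAt_exp_smul_const' A t).clm_apply (hasDerivAt_const t v)
  refine ⟨by simp, fun t ↦ A (NormedSpace.exp (t • A) v), .of_forall hderiv, by simp, ?_⟩
  simpa [Function.comp_def] using A.hasFDerivAt.comp_hasDerivAt 0 (hderiv 0)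

end Skew

variable {ι : Type*} [Fintype ι]

/-- The equation `F(D²u) = 1` on `Ω` linearized at `x`: the frame `e` diagonalizes `D²u(x)` with
eigenvalues `lam`, and `F i` is the partial derivative of the operator at `lam`. Of concavity and
homogeneity only their consequences for `F` are recorded: Euler's identity, and the tangent plane
inequality at the Hessians of `u` over `Ω`, each expressed in an arbitrary orthonormal frame. -/
structure IsLinearizationAt (u : E → ℝ) (Ω : Set E) (x : E) (e : OrthonormalBasis ι ℝ E)
    (F lam : ι → ℝ) : Prop where
  hess_apply : ∀ i v, hess u x (e i) v = lam i * ⟪e i, v⟫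
  pos : ∀ i, 0 < F i
  euler : ∑ i, F i * lam i = 1
  one_le : ∀ y ∈ Ω, ∀ v : ι → E, Orthonormal ℝ v → 1 ≤ ∑ i, F i * hess u y (v i) (v i)

namespace IsLinearizationAt

variable {u : E → ℝ} {Ω : Set E} {x : E} {e : OrthonormalBasis ι ℝ E} {F lam : ι → ℝ}

theorem sum_mul_hess_self (h : IsLinearizationAt u Ω x e F lam) :
    ∑ i, F i * hess u x (e i) (e i) = 1 := by
  simpa [h.hess_apply] using h.euler

theorem hasTwoJet_hess_exp [CompleteSpace E] {A : E →L[ℝ] E} (hΩ : IsOpen Ω)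
    (hu : ContDiffOn ℝ 4 u Ω) (hx : x ∈ Ω) (h : IsLinearizationAt u Ω x e F lam)
    (hA : A ∈ skewAdjoint (E →L[ℝ] E)) (q : E) (i : ι) :
    HasTwoJet (fun t : ℝ ↦ hess u (x + t • q) (NormedSpace.exp (t • A) (e i))
        (NormedSpace.exp (t • A) (e i)))
      (lam i) (∂[q] (hess u) x (e i) (e i))
      (∂[q] (∂[q] (hess u)) x (e i) (e i) + 4 * ∂[q] (hess u) x (e i) (A (e i)) +
        2 * (hess u x (A (e i)) (A (e i)) - lam i * ‖A (e i)‖ ^ 2)) := by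
  have hu₂ : ContDiffOn ℝ 2 u Ω := hu.of_le (by norm_num)
  have hu₃ : ContDiffOn ℝ 3 u Ω := hu.of_le (by norm_num)
  have hline := hasTwoJet_comp_line hΩ (contDiffOn_hess (m := 2) hΩ hu (by norm_num)) hx q
  have hexp := hasTwoJet_exp_smul_apply A (e i)
  have hortho : ⟪e i, A (e i)⟫ = 0 := by
    have := inner_apply_left_of_mem_skewAdjoint hA (e i) (e i)
    rw [real_inner_comm] at this
    linarith
  have hnorm : ⟪e i, A (A (e i))⟫ = -‖A (e i)‖ ^ 2 := by
    rw [← real_inner_self_eq_norm_sq, inner_apply_left_of_mem_skewAdjoint hA, neg_neg]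
  have hsymm : ∂[q] (hess u) x (A (e i)) (e i) = ∂[q] (hess u) x (e i) (A (e i)) := by
    have happly (v w : E) : ∂[q] (hess u) x v w = ∂[q] (∂[v] (∂[w] u)) x :=
      dirDeriv_hess_apply hΩ hu₃ q v w hx
    rw [happly, happly, dirDeriv_congr hΩ (dirDeriv_comm hΩ hu₂ _ _) q hx]
  convert (hline.clm_apply hexp).clm_apply hexp using 1
  · simp [h.hess_apply]
  · simp [hess_symm hΩ hu₂ hx (A (e i)), h.hess_apply, hortho]
  · simp only [add_apply, smul_apply, hsymm,
      hess_symm hΩ hu₂ hx (A (A (e i))), h.hess_apply, hnorm, nsmul_eq_mul]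
    push_cast
    ring

/-- Rotating the frame by `exp (tA)` while moving along `q` keeps the linearized operator at
least `1`, with equality at `t = 0`. -/
theorem skewAdjoint_conditions [CompleteSpace E] {A : E →L[ℝ] E} (hΩ : IsOpen Ω)
    (hu : ContDiffOn ℝ 4 u Ω) (hx : x ∈ Ω) (h : IsLinearizationAt u Ω x e F lam)
    (hA : A ∈ skewAdjoint (E →L[ℝ] E)) (q : E) :
    ∑ i, F i * ∂[q] (hess u) x (e i) (e i) = 0 ∧
    0 ≤ ∑ i, F i * (∂[q] (∂[q] (hess u)) x (e i) (e i) +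
      4 * ∂[q] (hess u) x (e i) (A (e i)) +
        2 * (hess u x (A (e i)) (A (e i)) - lam i * ‖A (e i)‖ ^ 2)) := by
  refine (HasTwoJet.sum Finset.univ fun i ↦ (h.hasTwoJet_hess_exp hΩ hu hx hA q i).const_mul
    (F i)).deriv_eq_zero_and_nonneg_of_isLocalMin ?_
  filter_upwards [eventually_line_mem hΩ hx q] with t ht
  simpa [h.sum_mul_hess_self] using
    h.one_le _ ht _ (orthonormal_exp_smul_apply hA e.orthonormal t)

theorem sum_mul_dirDeriv₃_eq_zero [CompleteSpace E] (hΩ : IsOpen Ω) (hu : ContDiffOn ℝ 4 u Ω)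
    (hx : x ∈ Ω) (h : IsLinearizationAt u Ω x e F lam) (q : E) :
    ∑ i, F i * ∂[e i] (∂[e i] (∂[q] u)) x = 0 := by
  have hu₃ : ContDiffOn ℝ 3 u Ω := hu.of_le (by norm_num)
  rw [← (h.skewAdjoint_conditions hΩ hu hx (zero_mem _) q).1]
  refine Finset.sum_congr rfl fun i _ ↦ ?_
  rw [← dirDeriv₃_rotate hΩ hu₃ q _ _ hx]
  exact congrArg _ (dirDeriv_hess_apply hΩ hu₃ q (e i) (e i) hx).symm

theorem sum_mul_rotation_eq (h : IsLinearizationAt u Ω x e F lam)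
    (B : E →L[ℝ] E →L[ℝ] ℝ) (hB : ∀ v w, B v w = B w v) (p : ι) {w : ι → ℝ} (hw : w p = 0)
    {W : E} (hW : W = ∑ k, w k • e k) {A : E →L[ℝ] E}
    (hA : ∀ v, A v = ⟪e p, v⟫ • W - ⟪W, v⟫ • e p) :
    ∑ i, F i * (4 * B (e i) (A (e i)) + 2 * (hess u x (A (e i)) (A (e i)) -
        lam i * ‖A (e i)‖ ^ 2)) =
      ∑ i, (F i - F p) * (2 * (lam p - lam i) * w i ^ 2 - 4 * w i * B (e i) (e p)) := by
  classical
  set R : ι → ℝ := fun i ↦ 2 * (lam p - lam i) * w i ^ 2 - 4 * w i * B (e i) (e p)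
  have hWe (i : ι) : ⟪W, e i⟫ = w i := by
    rw [hW]
    exact e.orthonormal.inner_left_fintype w i
  have hA_ne {i : ι} (hi : i ≠ p) : A (e i) = -w i • e p := by
    simp [hA, hWe, orthonormal_iff_ite.mp e.orthonormal, hi.symm]
  have hA_self : A (e p) = W := by simp [hA, hWe, hw]
  have hnorm : ‖W‖ ^ 2 = ∑ k, w k ^ 2 := by simp [← e.sum_sq_norm_inner_left W, hWe]
  have hhess : hess u x W W = ∑ k, lam k * w k ^ 2 := by
    have hleft : hess u x W = ∑ k, w k • hess u x (e k) := by simp [hW]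
    simp only [hleft, sum_apply, smul_apply, h.hess_apply, real_inner_comm W, hWe, smul_eq_mul]
    exact Finset.sum_congr rfl fun k _ ↦ by ring
  have hterm (i : ι) : 4 * B (e i) (A (e i)) + 2 * (hess u x (A (e i)) (A (e i)) -
      lam i * ‖A (e i)‖ ^ 2) = R i - if i = p then ∑ k, R k else 0 := by
    split_ifs with hi
    · have hBW : B (e p) W = ∑ k, w k * B (e k) (e p) := by simp [hW, hB (e p)]
      rw [hi, hA_self, hnorm, hhess, hBW, show R p = 0 by simp [R, hw], zero_sub,
        ← Finset.sum_neg_distrib]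
      simp only [Finset.mul_sum, ← Finset.sum_sub_distrib, ← Finset.sum_add_distrib]
      exact Finset.sum_congr rfl fun k _ ↦ by simp only [R]; ring
    · simp only [hA_ne hi, neg_smul, norm_neg, norm_smul, map_neg, map_smul, neg_apply, smul_apply,
        h.hess_apply, real_inner_self_eq_norm_sq, e.norm_eq_one, smul_eq_mul, Real.norm_eq_abs, R,
        mul_one, sq_abs, one_pow]
      ring
  change _ = ∑ i, (F i - F p) * R i
  simp_rw [hterm, sub_mul, mul_sub, Finset.sum_sub_distrib, mul_ite, mul_zero,
    Finset.sum_ite_eq', Finset.mem_univ, if_true, Finset.mul_sum]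

/-- Tilting the frame by the skew map `v ↦ ⟪e p, v⟫ W - ⟪W, v⟫ e p`, `W = ∑ wᵢ eᵢ`, bounds the
linearized operator on `∂[q] (∂[q] u)` from below by third derivatives. -/
theorem le_sum_mul_dirDeriv₄ [CompleteSpace E] (hΩ : IsOpen Ω) (hu : ContDiffOn ℝ 4 u Ω)
    (hx : x ∈ Ω) (h : IsLinearizationAt u Ω x e F lam) (p : ι) {w : ι → ℝ} (hw : w p = 0) (q : E) :
    ∑ i, (F i - F p) * (4 * w i * ∂[e i] (∂[e p] (∂[q] u)) x - 2 * (lam p - lam i) * w i ^ 2) ≤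
      ∑ i, F i * ∂[e i] (∂[e i] (∂[q] (∂[q] u))) x := by
  have hu₃ : ContDiffOn ℝ 3 u Ω := hu.of_le (by norm_num)
  set W : E := ∑ k, w k • e k with hW
  set A : E →L[ℝ] E := InnerProductSpace.rankOne ℝ W (e p) - InnerProductSpace.rankOne ℝ (e p) W
  have hA : A ∈ skewAdjoint (E →L[ℝ] E) := by
    simp [A, skewAdjoint.mem_iff, ContinuousLinearMap.star_eq_adjoint]
  have happly (v w : E) : ∂[q] (hess u) x v w = ∂[v] (∂[w] (∂[q] u)) x := by
    rw [← dirDeriv₃_rotate hΩ hu₃ q v w hx]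
    exact dirDeriv_hess_apply hΩ hu₃ q v w hx
  have hcomm (v w : E) : ∂[v] (∂[w] (∂[q] u)) x = ∂[w] (∂[v] (∂[q] u)) x :=
    dirDeriv_comm hΩ (contDiffOn_dirDeriv hΩ hu₃ (by norm_num) q) v w hx
  have hrot := h.sum_mul_rotation_eq (∂[q] (hess u) x)
    (fun v w ↦ by rw [happly, happly, hcomm]) p hw hW (A := A) fun v ↦ by simp [A]
  have hsecond := (h.skewAdjoint_conditions hΩ hu hx hA q).2
  have hsplit (a b c : ι → ℝ) : ∑ i, F i * (a i + 4 * b i + 2 * c i) =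
      ∑ i, F i * a i + ∑ i, F i * (4 * b i + 2 * c i) := by
    simp only [add_assoc, mul_add, Finset.sum_add_distrib]
  rw [hsplit, hrot] at hsecond
  simp_rw [dirDeriv_dirDeriv_hess_apply hΩ hu hx, dirDeriv₄_rotate hΩ hu hx q q, happly]
    at hsecond
  rw [← sub_nonneg, sub_eq_add_neg, ← Finset.sum_neg_distrib]
  convert hsecond using 4
  ring

end IsLinearizationAt

end LinearizedEquation

section HessianOperator

variable {n : ℕ} {Γ : Set (Fin n → ℝ)} {f : (Fin n → ℝ) → ℝ} {lam mu : Fin n → ℝ}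

theorem fderiv_eq_sum_fpd_mul (f : (Fin n → ℝ) → ℝ) (lam mu : Fin n → ℝ) :
    fderiv ℝ f lam mu = ∑ i, fpd f i lam * mu i := by
  conv_lhs => rw [pi_eq_sum_univ' mu]
  simp [fpd, mul_comm]

theorem IsConvexInvariantCone.one_mem (hΓ : IsConvexInvariantCone Γ) (hlam : lam ∈ Γ) :
    (fun _ ↦ (1 : ℝ)) ∈ Γ := by
  obtain ⟨-, -, -, hsmul, hadd, -⟩ := hΓ
  set t : ℝ := 1 + ∑ i, |lam i|
  have ht : 0 < t := by positivity
  have hlt (i : Fin n) : 0 < t - lam i := by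
    have : |lam i| ≤ ∑ i, |lam i| :=
      Finset.single_le_sum (f := fun i ↦ |lam i|) (fun _ _ ↦ abs_nonneg _) (Finset.mem_univ i)
    simp only [t]
    linarith [le_abs_self (lam i)]
  convert hsmul _ (hadd lam hlam (fun i ↦ t - lam i) hlt) t⁻¹ (inv_pos.mpr ht) using 1
  ext i
  simp [ht.ne']

namespace IsConcaveEllipticHessianOp

theorem differentiableAt (hf : IsConcaveEllipticHessianOp Γ f) (hΓ : IsConvexInvariantCone Γ)
    (hlam : lam ∈ Γ) : DifferentiableAt ℝ f lam :=
  (hf.1.differentiableOn two_ne_zero).differentiableAt (hΓ.1.mem_nhds hlam)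

theorem sum_fpd_mul_self (hf : IsConcaveEllipticHessianOp Γ f) (hΓ : IsConvexInvariantCone Γ)
    (hlam : lam ∈ Γ) : ∑ i, fpd f i lam * lam i = f lam := by
  obtain ⟨-, -, -, -, -, hhom⟩ := id hf
  have hchain : HasDerivAt (fun t : ℝ ↦ f (t • lam)) (fderiv ℝ f lam lam) 1 := by
    have hfl : HasFDerivAt f (fderiv ℝ f lam) ((1 : ℝ) • lam) := by
      simpa using (hf.differentiableAt hΓ hlam).hasFDerivAt
    exact hfl.comp_hasDerivAt 1 (by simpa using (hasDerivAt_id (1 : ℝ)).smul_const lam)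
  have hlinear : HasDerivAt (fun t : ℝ ↦ f (t • lam)) (f lam) 1 := by
    refine (show HasDerivAt (fun t : ℝ ↦ t * f lam) (f lam) 1 by
      simpa using (hasDerivAt_id (1 : ℝ)).mul_const (f lam)).congr_of_eventuallyEq ?_
    filter_upwards [lt_mem_nhds (zero_lt_one' ℝ)] with t ht using hhom lam hlam t ht
  rw [← fderiv_eq_sum_fpd_mul]
  exact hchain.unique hlinear

/-- Concavity and homogeneity give superadditivity, `f (lam + t • mu) ≥ f lam + t * f mu`. -/
theorem le_sum_fpd_mul (hf : IsConcaveEllipticHessianOp Γ f) (hΓ : IsConvexInvariantCone Γ)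
    (hlam : lam ∈ Γ) (hmu : mu ∈ Γ) : f mu ≤ ∑ i, fpd f i lam * mu i := by
  obtain ⟨-, hconc, -, -, -, hhom⟩ := id hf
  obtain ⟨-, -, hconv, hsmul, -, -⟩ := id hΓ
  have hderiv : HasDerivAt (fun t : ℝ ↦ f (lam + t • mu)) (fderiv ℝ f lam mu) 0 := by
    have hfl : HasFDerivAt f (fderiv ℝ f lam) (lam + (0 : ℝ) • mu) := by
      simpa using (hf.differentiableAt hΓ hlam).hasFDerivAt
    exact hfl.comp_hasDerivAt 0
      (by simpa using ((hasDerivAt_id (0 : ℝ)).smul_const mu).const_add lam)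
  have hsuper {t : ℝ} (ht : 0 < t) : f lam + t * f mu ≤ f (lam + t • mu) := by
    have hhalf : (0 : ℝ) ≤ 1 / 2 := by norm_num
    have hmem := hsmul mu hmu t ht
    have hmid := hconc.2 hlam hmem hhalf hhalf (add_halves 1)
    have hscale := hhom _ (hconv hlam hmem hhalf hhalf (add_halves 1)) 2 two_pos
    rw [smul_add, smul_smul, smul_smul _ _ (t • mu), mul_one_div_cancel two_ne_zero, one_smul,
      one_smul] at hscale
    rw [hhom mu hmu t ht, smul_eq_mul, smul_eq_mul] at hmid
    linarith
  rw [← fderiv_eq_sum_fpd_mul]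
  refine ge_of_tendsto hderiv.tendsto_slope_zero_right ?_
  filter_upwards [self_mem_nhdsWithin] with t (ht : 0 < t)
  rw [zero_add, zero_smul, add_zero, smul_eq_mul, inv_mul_eq_div, le_div_iff₀ ht]
  linarith [hsuper ht]

theorem le_sum_fpd_mul_mulVec (hf : IsConcaveEllipticHessianOp Γ f)
    (hΓ : IsConvexInvariantCone Γ) (hlam : lam ∈ Γ) (hmu : mu ∈ Γ)
    {W : Matrix (Fin n) (Fin n) ℝ} (hW : W ∈ doublyStochastic ℝ (Fin n)) :
    f mu ≤ ∑ i, fpd f i lam * W.mulVec mu i := by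
  obtain ⟨w, hw_nonneg, hw_sum, rfl⟩ := exists_eq_sum_perm_of_mem_doublyStochastic hW
  calc f mu = ∑ σ, w σ * f mu := by rw [← Finset.sum_mul, hw_sum, one_mul]
    _ ≤ ∑ σ, w σ * ∑ i, fpd f i lam * mu (σ i) := by
        refine Finset.sum_le_sum fun σ _ ↦ mul_le_mul_of_nonneg_left ?_ (hw_nonneg σ)
        rw [← hf.2.2.1 mu hmu σ]
        exact hf.le_sum_fpd_mul hΓ hlam (hΓ.2.2.2.2.2 mu hmu σ)
    _ = ∑ i, fpd f i lam * (∑ σ, w σ • σ.permMatrix ℝ).mulVec mu i := by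
        simp only [Matrix.sum_mulVec, Matrix.smul_mulVec, Matrix.permMatrix_mulVec,
          Finset.sum_apply, Pi.smul_apply, Function.comp_apply, smul_eq_mul, Finset.mul_sum]
        rw [Finset.sum_comm]
        exact Finset.sum_congr rfl fun i _ ↦ Finset.sum_congr rfl fun σ _ ↦ by ring

theorem antivary_fpd (hf : IsConcaveEllipticHessianOp Γ f) (hΓ : IsConvexInvariantCone Γ)
    (hlam : lam ∈ Γ) : Antivary (fun i ↦ fpd f i lam) lam := by
  intro i j hij
  have hne : i ≠ j := by rintro rfl; exact hij.false
  have hswap := hf.le_sum_fpd_mul hΓ hlam (hΓ.2.2.2.2.2 lam hlam (Equiv.swap i j))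
  rw [hf.2.2.1 lam hlam, ← hf.sum_fpd_mul_self hΓ hlam, ← sub_nonneg,
    ← Finset.sum_sub_distrib, ← Finset.sum_subset (Finset.subset_univ {i, j})] at hswap
  · simp only [Finset.sum_pair hne, Function.comp_apply, Equiv.swap_apply_left,
      Equiv.swap_apply_right] at hswap
    nlinarith
  · intro k _ hk
    simp only [Finset.mem_insert, Finset.mem_singleton, not_or] at hk
    simp [Equiv.swap_apply_of_ne_of_ne hk.1 hk.2]

end IsConcaveEllipticHessianOp

end HessianOperator

section Eigenframe

variable {ι : Type*}

theorem exists_forall_le_and_forall_ge_of_antivary [Finite ι] [Nonempty ι] {F lam : ι → ℝ}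
    (h : Antivary F lam) : ∃ k, (∀ i, lam k ≤ lam i) ∧ ∀ i, F i ≤ F k := by
  obtain ⟨k, hk⟩ := Finite.exists_min fun i ↦ toLex (lam i, OrderDual.toDual (F i))
  simp only [Prod.Lex.le_iff, ofLex_toLex, OrderDual.toDual_le_toDual] at hk
  exact ⟨k, fun i ↦ (hk i).elim LT.lt.le fun hi ↦ hi.1.le,
    fun i ↦ (hk i).elim (fun hi ↦ h hi) And.right⟩

variable [Fintype ι]

theorem neg_le_of_antivary {F lam : ι → ℝ} {c₀ D₁ D₂ : ℝ} (hF : ∀ i, 0 < F i)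
    (hanti : Antivary F lam) (hsum : 0 ≤ ∑ i, F i * lam i) (hc₀ : 0 < c₀) (hS : c₀ ≤ ∑ i, F i)
    (hD₁ : 0 ≤ D₁) (hD₂ : 0 ≤ D₂) (hD : ∀ i, D₁ < lam i → F i * lam i ≤ D₂) (i : ι) :
    -(Fintype.card ι * (Fintype.card ι * D₂ / c₀ + D₁)) ≤ lam i := by
  have : Nonempty ι := ⟨i⟩
  obtain ⟨k, hlam_min, hF_max⟩ := exists_forall_le_and_forall_ge_of_antivary hanti
  have hterm (j : ι) : F j * lam j ≤ D₂ + D₁ * F j := by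
    have := mul_nonneg hD₁ (hF j).le
    rcases lt_or_ge D₁ (lam j) with hj | hj
    · linarith [hD j hj]
    · nlinarith [hF j]
  have hsplit : D₂ + D₁ * F k - F k * lam k ≤ ∑ j, (D₂ + D₁ * F j - F j * lam j) :=
    Finset.single_le_sum (f := fun j ↦ D₂ + D₁ * F j - F j * lam j)
      (fun j _ ↦ sub_nonneg.mpr (hterm j)) (Finset.mem_univ k)
  rw [Finset.sum_sub_distrib, Finset.sum_add_distrib, ← Finset.mul_sum, Finset.sum_const,
    Finset.card_univ, nsmul_eq_mul] at hsplit
  have hcard : ∑ j, F j ≤ Fintype.card ι * F k := by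
    simpa using Finset.sum_le_card_nsmul Finset.univ F (F k) fun j _ ↦ hF_max j
  have hFk : -lam k * F k ≤ Fintype.card ι * (Fintype.card ι * D₂ / c₀ + D₁) * F k :=
    calc -lam k * F k ≤ Fintype.card ι * D₂ + D₁ * ∑ j, F j := by
          linarith [mul_nonneg hD₁ (hF k).le]
      _ = (Fintype.card ι * D₂ / c₀) * c₀ + D₁ * ∑ j, F j := by rw [div_mul_cancel₀ _ hc₀.ne']
      _ ≤ (Fintype.card ι * D₂ / c₀) * ∑ j, F j + D₁ * ∑ j, F j := by gcongr
      _ = (Fintype.card ι * D₂ / c₀ + D₁) * ∑ j, F j := by ring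
      _ ≤ (Fintype.card ι * D₂ / c₀ + D₁) * (Fintype.card ι * F k) := by gcongr
      _ = Fintype.card ι * (Fintype.card ι * D₂ / c₀ + D₁) * F k := by ring
  linarith [le_of_mul_le_mul_right hFk (hF k), hlam_min i]

variable {E : Type*} [NormedAddCommGroup E] [InnerProductSpace ℝ E]

theorem sq_inner_mem_doublyStochastic [DecidableEq ι] (v b : OrthonormalBasis ι ℝ E) :
    Matrix.of (fun i j ↦ ⟪b j, v i⟫ ^ 2) ∈ doublyStochastic ℝ ι := by
  refine mem_doublyStochastic_iff_sum.mpr ⟨fun i j ↦ sq_nonneg _, fun i ↦ ?_, fun j ↦ ?_⟩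
  · simpa using b.sum_sq_norm_inner_right (v i)
  · simpa using v.sum_sq_norm_inner_left (b j)

theorem apply_eq_sum_of_eigenframe {B : E →L[ℝ] E →L[ℝ] ℝ} {e : OrthonormalBasis ι ℝ E}
    {lam : ι → ℝ} (h : ∀ i v, B (e i) v = lam i * ⟪e i, v⟫) (v w : E) :
    B v w = ∑ i, lam i * (⟪e i, v⟫ * ⟪e i, w⟫) := by
  have hB : B v = ∑ i, ⟪e i, v⟫ • B (e i) := by
    simp only [← map_smul, ← map_sum, e.sum_repr']
  simp only [hB, sum_apply, smul_apply, h, smul_eq_mul]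
  exact Finset.sum_congr rfl fun i _ ↦ by ring

theorem exists_norm_le_abs_of_eigenframe [Nonempty ι] {B : E →L[ℝ] E →L[ℝ] ℝ}
    {e : OrthonormalBasis ι ℝ E} {lam : ι → ℝ} (h : ∀ i v, B (e i) v = lam i * ⟪e i, v⟫) :
    ∃ p, ‖B‖ ≤ |lam p| := by
  classical
  obtain ⟨p, hp⟩ := Finite.exists_max fun i ↦ |lam i|
  refine ⟨p, B.opNorm_le_bound (abs_nonneg _) fun v ↦ abs_le_of_sq_le_sq' ?_ (by positivity) |>.2⟩
  calc ‖B v‖ ^ 2 = ∑ i, (lam i * ⟪e i, v⟫) ^ 2 := by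
        simp [e.norm_dual, apply_eq_sum_of_eigenframe h, e.inner_eq_ite]
    _ ≤ ∑ i, (lam p * ⟪e i, v⟫) ^ 2 := by
        simp only [mul_pow]
        gcongr ∑ i, ?_ * _ with i
        exact sq_le_sq.mpr (hp i)
    _ = (|lam p| * ‖v‖) ^ 2 := by
        simp only [mul_pow, ← Finset.mul_sum, sq_abs, e.sum_sq_inner_right]

variable {n : ℕ} {Ω : Set (EuclideanSpace ℝ (Fin n))} {u : EuclideanSpace ℝ (Fin n) → ℝ}
  {x : EuclideanSpace ℝ (Fin n)}

theorem hessianMatrix_apply (i j : Fin n) : hessianMatrix u x i j =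
    hess u x (EuclideanSpace.single i 1) (EuclideanSpace.single j 1) := by
  simp [hessianMatrix, iteratedFDeriv_two_apply, hess]

theorem exists_orthonormalBasis_hess_apply (hΩ : IsOpen Ω) (hu : ContDiffOn ℝ 2 u Ω) (hx : x ∈ Ω) :
    ∃ e : OrthonormalBasis (Fin n) ℝ (EuclideanSpace ℝ (Fin n)),
      ∀ i v, hess u x (e i) v = hessEigen u x i * ⟪e i, v⟫ := by
  have hH : (hessianMatrix u x).IsHermitian := by
    ext i j
    simp [hessianMatrix_apply, hess_symm hΩ hu hx (EuclideanSpace.single i 1)]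
  refine ⟨hH.eigenvectorBasis, fun i v ↦ ?_⟩
  have hmulVec (k : Fin n) : hess u x (EuclideanSpace.single k 1) (hH.eigenvectorBasis i) =
      (hessianMatrix u x).mulVec (hH.eigenvectorBasis i) k := by
    conv_lhs => rw [← (EuclideanSpace.basisFun (Fin n) ℝ).sum_repr (hH.eigenvectorBasis i)]
    simp [Matrix.mulVec, dotProduct, hessianMatrix_apply, mul_comm]
  rw [hess_symm hΩ hu hx]
  conv_lhs => rw [← (EuclideanSpace.basisFun (Fin n) ℝ).sum_repr v]
  simp only [map_sum, map_smul, sum_apply, smul_apply, EuclideanSpace.basisFun_repr,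
    EuclideanSpace.basisFun_apply, hmulVec, hH.mulVec_eigenvectorBasis]
  simp only [hessEigen, dif_pos hH, Pi.smul_apply, smul_eq_mul, PiLp.inner_apply,
    RCLike.inner_apply, conj_trivial, Finset.mul_sum]
  exact Finset.sum_congr rfl fun k _ ↦ by ring

variable {Γ : Set (Fin n → ℝ)} {f : (Fin n → ℝ) → ℝ}

theorem exists_isLinearizationAt (hΓ : IsConvexInvariantCone Γ)
    (hf : IsConcaveEllipticHessianOp Γ f) (hΩ : IsOpen Ω) (hu : ContDiffOn ℝ 2 u Ω)
    (hmem : ∀ y ∈ Ω, hessEigen u y ∈ Γ) (heq : ∀ y ∈ Ω, f (hessEigen u y) = 1) (hx : x ∈ Ω) :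
    ∃ e : OrthonormalBasis (Fin n) ℝ (EuclideanSpace ℝ (Fin n)),
      IsLinearizationAt u Ω x e (fun i ↦ fpd f i (hessEigen u x)) (hessEigen u x) := by
  obtain ⟨e, he⟩ := exists_orthonormalBasis_hess_apply hΩ hu hx
  refine ⟨e, he, hf.2.2.2.1 _ (hmem x hx), ?_, fun y hy v hv ↦ ?_⟩
  · rw [hf.sum_fpd_mul_self hΓ (hmem x hx), heq x hx]
  obtain ⟨b, hb⟩ := exists_orthonormalBasis_hess_apply hΩ hu hy
  obtain ⟨v', rfl⟩ : ∃ v' : OrthonormalBasis (Fin n) ℝ (EuclideanSpace ℝ (Fin n)), ⇑v' = v := by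
    obtain ⟨v', hv'⟩ := Orthonormal.exists_orthonormalBasis_extension_of_card_eq
      (s := Set.univ) finrank_euclideanSpace (hv.comp _ Subtype.val_injective)
    exact ⟨v', funext fun i ↦ hv' i trivial⟩
  have := hf.le_sum_fpd_mul_mulVec hΓ (hmem x hx) (hmem y hy) (sq_inner_mem_doublyStochastic v' b)
  rw [heq y hy] at this
  simpa only [apply_eq_sum_of_eigenframe hb, ← sq, Matrix.mulVec, dotProduct, Matrix.of_apply,
    mul_comm (_ ^ 2)] using this

end Eigenframe

section TestFunction

variable {E : Type*} [NormedAddCommGroup E] [InnerProductSpace ℝ E] {ι : Type*} [Fintype ι]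
  {u a : E → ℝ} {Ω : Set E} {x z : E} {e : OrthonormalBasis ι ℝ E} {F lam : ι → ℝ}

theorem isLocalMax_comp_line {g : E → ℝ} (hg : IsLocalMax g x) (v : E) :
    IsLocalMax (fun t : ℝ ↦ g (x + t • v)) 0 :=
  IsLocalMax.comp_continuous (g := fun t : ℝ ↦ x + t • v) (by simpa using hg) (by fun_prop)

theorem IsLinearizationAt.dirDeriv_dirDeriv_self (hΩ : IsOpen Ω) (hu : ContDiffOn ℝ 2 u Ω)
    (hx : x ∈ Ω) (h : IsLinearizationAt u Ω x e F lam) (i : ι) :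
    ∂[e i] (∂[e i] u) x = lam i := by
  rw [dirDeriv_dirDeriv_eq_fderiv_fderiv hΩ hu hx, ← hess, h.hess_apply]
  simp

theorem hasTwoJet_norm_sub_sq_line (x z v : E) :
    HasTwoJet (fun t : ℝ ↦ ‖x + t • v - z‖ ^ 2) (‖x - z‖ ^ 2) (2 * ⟪x - z, v⟫)
      (2 * ‖v‖ ^ 2) := by
  simpa [add_sub_right_comm] using (HasTwoJet.line (x - z) v).norm_sq

/-- The logarithm of the test function `(-u - ε) ^ α * a * exp (A / 2 * |· - z|²)`, to whose
maxima the linearized equation is applied. -/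
def logTest (u a : E → ℝ) (ε α A : ℝ) (z y : E) : ℝ :=
  α * Real.log (-u y - ε) + Real.log (a y) + A / 2 * ‖y - z‖ ^ 2

variable {ε α A : ℝ}

theorem dirDeriv_conditions_of_isLocalMax_logTest (hΩ : IsOpen Ω) (hu : ContDiffOn ℝ 2 u Ω)
    (ha : ContDiffOn ℝ 2 a Ω) (hx : x ∈ Ω) (hux : 0 < -u x - ε) (hax : 0 < a x)
    (hmax : IsLocalMax (logTest u a ε α A z) x) {v : E} (hv : ‖v‖ = 1) :
    ∂[v] a x / a x = α * (∂[v] u x / (-u x - ε)) - A * ⟪x - z, v⟫ ∧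
      ∂[v] (∂[v] a) x / a x + A ≤ (∂[v] a x / a x) ^ 2 +
        α / (-u x - ε) * ∂[v] (∂[v] u) x + α * (∂[v] u x / (-u x - ε)) ^ 2 := by
  have hη : HasTwoJet (fun t : ℝ ↦ -u (x + t • v) - ε) (-u x - ε) (-∂[v] u x)
      (-∂[v] (∂[v] u) x) := by
    simpa [sub_eq_add_neg] using
      ((hasTwoJet_comp_line hΩ hu hx v).const_mul (-1)).add (HasTwoJet.const (-ε))
  have hjet := (((hη.log hux).const_mul α).add ((hasTwoJet_comp_line hΩ ha hx v).log hax)).add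
    ((hasTwoJet_norm_sub_sq_line x z v).const_mul (A / 2))
  obtain ⟨hfirst, hsecond⟩ :=
    hjet.deriv_eq_zero_and_nonpos_of_isLocalMax (isLocalMax_comp_line hmax v)
  rw [neg_div] at hfirst
  rw [hv, neg_div, neg_div] at hsecond
  constructor
  · linarith
  · rw [div_mul_eq_mul_div, mul_div_assoc]
    linarith

theorem IsLinearizationAt.sum_conditions_of_isLocalMax_logTest (hΩ : IsOpen Ω)
    (hu : ContDiffOn ℝ 2 u Ω) (hx : x ∈ Ω) (h : IsLinearizationAt u Ω x e F lam)
    (ha : ContDiffOn ℝ 2 a Ω) (hux : 0 < -u x - ε) (hax : 0 < a x)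
    (hmax : IsLocalMax (logTest u a ε α A z) x) :
    (∑ i, F i * ∂[e i] (∂[e i] a) x) / a x + A * ∑ i, F i ≤
      ∑ i, F i * ((∂[e i] a x / a x) ^ 2 + α * (∂[e i] u x / (-u x - ε)) ^ 2) +
        α / (-u x - ε) := by
  have hi (i : ι) : F i * (∂[e i] (∂[e i] a) x / a x + A) ≤
      F i * ((∂[e i] a x / a x) ^ 2 + α / (-u x - ε) * lam i +
        α * (∂[e i] u x / (-u x - ε)) ^ 2) := by
    rw [← h.dirDeriv_dirDeriv_self hΩ hu hx]
    exact mul_le_mul_of_nonneg_left (dirDeriv_conditions_of_isLocalMax_logTest hΩ hu ha hx hux hax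
      hmax (e.norm_eq_one i)).2 (h.pos i).le
  calc (∑ i, F i * ∂[e i] (∂[e i] a) x) / a x + A * ∑ i, F i
      = ∑ i, F i * (∂[e i] (∂[e i] a) x / a x + A) := by
        simp only [mul_add, Finset.sum_add_distrib, Finset.sum_div, mul_div_assoc, mul_comm A,
          Finset.sum_mul]
    _ ≤ _ := Finset.sum_le_sum fun i _ ↦ hi i
    _ = ∑ i, F i * ((∂[e i] a x / a x) ^ 2 + α * (∂[e i] u x / (-u x - ε)) ^ 2) +
        α / (-u x - ε) * ∑ i, F i * lam i := by
        rw [Finset.mul_sum, ← Finset.sum_add_distrib]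
        exact Finset.sum_congr rfl fun i _ ↦ by ring
    _ = _ := by rw [h.euler, mul_one]

end TestFunction

section Dirichlet

theorem exists_mem_frontier_isMaxOn {X : Type*} [TopologicalSpace X] {Ω : Set X} {φ : X → ℝ}
    (hΩ : IsOpen Ω) (hcompact : IsCompact (closure Ω)) (hne : Ω.Nonempty)
    (hφ : ContinuousOn φ (closure Ω)) (hmax : ∀ x ∈ Ω, ¬IsLocalMax φ x) :
    ∃ z ∈ frontier Ω, IsMaxOn φ (closure Ω) z := by
  obtain ⟨z, hz, hzmax⟩ := hcompact.exists_isMaxOn hne.closure hφ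
  refine ⟨z, hΩ.frontier_eq ▸ ⟨hz, fun hzΩ ↦ hmax z hzΩ ?_⟩, hzmax⟩
  exact hzmax.isLocalMax (mem_of_superset (hΩ.mem_nhds hzΩ) subset_closure)

/-- The constants on which the estimate depends: the ellipticity and growth constants of
`CoefficientBounds`, and a bound `d` for the diameter of the domain. -/
structure StructureConstants where
  (c₀ D₁ D₂ M N Λ d : ℝ)
  c₀_pos : 0 < c₀
  D₁_pos : 0 < D₁
  D₂_pos : 0 < D₂
  M_pos : 0 < M
  N_pos : 0 < N
  Λ_nonneg : 0 ≤ Λ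
  d_pos : 0 < d

variable {E : Type*} [NormedAddCommGroup E] [InnerProductSpace ℝ E] {ι : Type*} [Fintype ι]

/-- The quantitative hypotheses on the linearized coefficients `F` at the eigenvalues `lam`:
condition D together with the bounds that conditions D and N imply. -/
structure CoefficientBounds (K : StructureConstants) (F lam : ι → ℝ) : Prop where
  le_sum : K.c₀ ≤ ∑ i, F i
  mul_le : ∀ i, K.D₁ < lam i → F i * lam i ≤ K.D₂
  le_rpow : ∀ i, K.D₁ < lam i → lam i ≤ K.M * (∑ j, F j) ^ K.N
  neg_le : ∀ i, -K.Λ ≤ lam i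

variable (ι) in
/-- `u` solves the Dirichlet problem `F(D²u) = 1` in `Ω`, `u = 0` on `∂Ω`, on a bounded open set
of diameter at most `K.d`, with coefficients controlled by `K`. The equation enters only through
its linearizations. -/
structure IsDirichletSolution (K : StructureConstants) (u : E → ℝ) (Ω : Set E) : Prop where
  isOpen : IsOpen Ω
  isBounded : Bornology.IsBounded Ω
  diam_le : Metric.diam Ω ≤ K.d
  contDiffOn : ContDiffOn ℝ 4 u Ω
  continuousOn : ContinuousOn u (closure Ω)
  eq_zero : ∀ x ∈ frontier Ω, u x = 0
  exists_isLinearizationAt : ∀ x ∈ Ω, ∃ (e : OrthonormalBasis ι ℝ E) (F lam : ι → ℝ),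
    IsLinearizationAt u Ω x e F lam ∧ CoefficientBounds K F lam

theorem not_isLocalMax_of_sum_pos {g : E → ℝ} {x : E} {v : ι → E} {F b c : ι → ℝ}
    (hF : ∀ i, 0 ≤ F i) (hg : ∀ i, HasTwoJet (fun t : ℝ ↦ g (x + t • v i)) (g x) (b i) (c i))
    (hpos : 0 < ∑ i, F i * c i) : ¬IsLocalMax g x := fun hmax ↦
  hpos.not_ge <| Finset.sum_nonpos fun i _ ↦ mul_nonpos_of_nonneg_of_nonpos (hF i)
    ((hg i).deriv_eq_zero_and_nonpos_of_isLocalMax (isLocalMax_comp_line hmax (v i))).2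

namespace IsDirichletSolution

variable {K : StructureConstants} {u : E → ℝ} {Ω : Set E} {x : E}

theorem contDiffOn_two (h : IsDirichletSolution ι K u Ω) : ContDiffOn ℝ 2 u Ω :=
  h.contDiffOn.of_le (by norm_num)

theorem norm_sub_le (h : IsDirichletSolution ι K u Ω) {y : E} (hy : y ∈ closure Ω)
    (hx : x ∈ closure Ω) : ‖y - x‖ ≤ K.d := by
  rw [← dist_eq_norm]
  exact (Metric.dist_le_diam_of_mem h.isBounded.closure hy hx).trans
    ((Metric.diam_closure Ω).trans_le h.diam_le)

theorem abs_inner_sub_le (h : IsDirichletSolution ι K u Ω) {y v : E} (hy : y ∈ closure Ω)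
    (hx : x ∈ closure Ω) (hv : ‖v‖ = 1) : |⟪y - x, v⟫| ≤ K.d := by
  simpa [hv] using (abs_real_inner_le_norm (y - x) v).trans
    (mul_le_mul_of_nonneg_right (h.norm_sub_le hy hx) (norm_nonneg v))

variable [ProperSpace E]

theorem isCompact_closure (h : IsDirichletSolution ι K u Ω) : IsCompact (closure Ω) :=
  h.isBounded.isCompact_closure

theorem neg (h : IsDirichletSolution ι K u Ω) (hx : x ∈ Ω) : u x < 0 := by
  have hnot (y : E) (hy : y ∈ Ω) : ¬IsLocalMax u y := by
    obtain ⟨e, F, lam, hlin, -⟩ := h.exists_isLinearizationAt y hy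
    refine not_isLocalMax_of_sum_pos (v := e) (fun i ↦ (hlin.pos i).le)
      (fun i ↦ hasTwoJet_comp_line h.isOpen h.contDiffOn_two hy (e i)) ?_
    simp only [hlin.dirDeriv_dirDeriv_self h.isOpen h.contDiffOn_two hy, hlin.euler, one_pos]
  obtain ⟨z, hz, hmax⟩ := exists_mem_frontier_isMaxOn h.isOpen h.isCompact_closure ⟨x, hx⟩
    h.continuousOn hnot
  have hle (y : E) (hy : y ∈ Ω) : u y ≤ 0 := h.eq_zero z hz ▸ hmax (subset_closure hy)
  refine (hle x hx).lt_of_ne fun hux ↦ hnot x hx ?_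
  filter_upwards [h.isOpen.mem_nhds hx] with y hy using (hle y hy).trans_eq hux.symm

theorem neg_le_sq_div (h : IsDirichletSolution ι K u Ω) (hx : x ∈ Ω) :
    -u x ≤ K.d ^ 2 / K.c₀ := by
  have hc₀ := K.c₀_pos
  have hnot (y : E) (hy : y ∈ Ω) : ¬IsLocalMax (fun z ↦ K.c₀⁻¹ * ‖z - x‖ ^ 2 + -1 * u z) y := by
    obtain ⟨e, F, lam, hlin, hK⟩ := h.exists_isLinearizationAt y hy
    refine not_isLocalMax_of_sum_pos (v := e) (fun i ↦ (hlin.pos i).le) (fun i ↦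
      ((hasTwoJet_norm_sub_sq_line y x (e i)).const_mul K.c₀⁻¹).add
        ((hasTwoJet_comp_line h.isOpen h.contDiffOn_two hy (e i)).const_mul (-1))) ?_
    calc (0 : ℝ) < 2 * (K.c₀⁻¹ * K.c₀) - 1 := by rw [inv_mul_cancel₀ hc₀.ne']; norm_num
      _ ≤ 2 * (K.c₀⁻¹ * ∑ i, F i) - ∑ i, F i * lam i := by
        rw [hlin.euler]
        gcongr
        exact hK.le_sum
      _ = _ := by
        simp only [hlin.dirDeriv_dirDeriv_self h.isOpen h.contDiffOn_two hy, e.norm_eq_one,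
          Finset.mul_sum, ← Finset.sum_sub_distrib]
        exact Finset.sum_congr rfl fun i _ ↦ by ring
  obtain ⟨z, hz, hmax⟩ := exists_mem_frontier_isMaxOn h.isOpen h.isCompact_closure ⟨x, hx⟩
    (by have := h.continuousOn; fun_prop) hnot
  calc -u x = K.c₀⁻¹ * ‖x - x‖ ^ 2 + -1 * u x := by simp
    _ ≤ K.c₀⁻¹ * ‖z - x‖ ^ 2 + -1 * u z := hmax (subset_closure hx)
    _ = ‖z - x‖ ^ 2 / K.c₀ := by rw [h.eq_zero z hz]; ring
    _ ≤ K.d ^ 2 / K.c₀ := by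
      gcongr
      exact h.norm_sub_le (frontier_subset_closure hz) (subset_closure hx)

end IsDirichletSolution

end Dirichlet

section WeightedMaximum

variable {E : Type*} [NormedAddCommGroup E] {u ψ : E → ℝ} {x y z : E} {ε α A : ℝ}

theorem exp_logTest (hu : 0 < -u y - ε) (hψ : 0 < ψ y) :
    Real.exp (logTest u ψ ε α A z y) =
      (-u y - ε) ^ α * ψ y * Real.exp (A / 2 * ‖y - z‖ ^ 2) := by
  rw [logTest, Real.exp_add, Real.exp_add, Real.exp_log hψ, mul_comm α, ← Real.rpow_def_of_pos hu]

theorem isLocalMax_logTest_of_le {b : E → ℝ} (hmax : IsLocalMax (logTest u ψ ε α A z) y)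
    (hb : ContinuousAt b y) (hby : b y = ψ y) (hpos : 0 < ψ y) (hle : ∀ᶠ y' in 𝓝 y, b y' ≤ ψ y') :
    IsLocalMax (logTest u b ε α A z) y := by
  filter_upwards [hmax, hle, hb.eventually (lt_mem_nhds (hby ▸ hpos))] with y' hy' hle' hpos'
  calc logTest u b ε α A z y' ≤ logTest u ψ ε α A z y' := by
        unfold logTest
        gcongr
    _ ≤ logTest u ψ ε α A z y := hy'
    _ = logTest u b ε α A z y := by simp only [logTest, hby]

namespace IsDirichletSolution

variable [InnerProductSpace ℝ E] {ι : Type*} [Fintype ι] {K : StructureConstants} {Ω : Set E}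

theorem superlevel_subset (h : IsDirichletSolution ι K u Ω) (hε : 0 < ε) :
    {y ∈ closure Ω | ε ≤ -u y} ⊆ Ω := fun y ⟨hy, hεy⟩ ↦ by
  by_contra hyΩ
  have : u y = 0 := h.eq_zero y (h.isOpen.frontier_eq ▸ ⟨hy, hyΩ⟩)
  linarith

variable [ProperSpace E]

theorem isCompact_superlevel (h : IsDirichletSolution ι K u Ω) (ε : ℝ) :
    IsCompact {y ∈ closure Ω | ε ≤ -u y} :=
  h.isCompact_closure.of_isClosed_subset
    (h.continuousOn.neg.preimage_isClosed_of_isClosed isClosed_closure isClosed_Ici)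
    (Set.sep_subset _ _)

theorem exists_isLocalMax_logTest (h : IsDirichletSolution ι K u Ω) (hψ : ContinuousOn ψ Ω)
    (hα : 0 < α) (hε : 0 < ε) (hx : x ∈ Ω) (hux : 0 < -u x - ε) (hψx : 0 < ψ x) :
    ∃ y ∈ Ω, 0 < -u y - ε ∧ 0 < ψ y ∧ IsLocalMax (logTest u ψ ε α A z) y ∧
      logTest u ψ ε α A z x ≤ logTest u ψ ε α A z y := by
  set Φ : E → ℝ := fun y ↦ (-u y - ε) ^ α * ψ y * Real.exp (A / 2 * ‖y - z‖ ^ 2)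
  have hsub := h.superlevel_subset hε
  have hΦ : ContinuousOn Φ {y ∈ closure Ω | ε ≤ -u y} := by
    have huc := h.continuousOn.mono (Set.sep_subset (closure Ω) fun y ↦ ε ≤ -u y)
    have hψc := hψ.mono hsub
    exact (((huc.neg.sub continuousOn_const).rpow_const fun _ _ ↦ .inr hα.le).mul hψc).mul
      (by fun_prop)
  obtain ⟨y, hy, hmax⟩ := (h.isCompact_superlevel ε).exists_isMaxOn
    ⟨x, subset_closure hx, by linarith⟩ hΦ
  have hyΩ : y ∈ Ω := hsub hy
  have hΦx : Φ x ≤ Φ y := hmax ⟨subset_closure hx, by linarith⟩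
  have hΦy : 0 < Φ y := lt_of_lt_of_le (by positivity) hΦx
  have hbase : 0 ≤ -u y - ε := sub_nonneg.mpr hy.2
  have huy : 0 < -u y - ε := by
    refine hbase.lt_of_ne fun h0 ↦ hΦy.ne' ?_
    simp [Φ, ← h0, Real.zero_rpow hα.ne']
  have hψy : 0 < ψ y := by
    by_contra! hle
    exact hΦy.not_ge (mul_nonpos_of_nonpos_of_nonneg
      (mul_nonpos_of_nonneg_of_nonpos (by positivity) hle) (Real.exp_nonneg _))
  have hlog {y' : E} (huy' : 0 < -u y' - ε) (hψy' : 0 < ψ y') (hle : Φ y' ≤ Φ y) :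
      logTest u ψ ε α A z y' ≤ logTest u ψ ε α A z y := by
    rwa [← Real.exp_le_exp, exp_logTest huy' hψy', exp_logTest huy hψy]
  refine ⟨y, hyΩ, huy, hψy, ?_, hlog hux hψx hΦx⟩
  have hnhds : Ω ∈ 𝓝 y := h.isOpen.mem_nhds hyΩ
  have hucont : ContinuousAt (fun y' ↦ -u y' - ε) y :=
    ((h.continuousOn.mono subset_closure).continuousAt hnhds).neg.sub continuousAt_const
  filter_upwards [hnhds, hucont.eventually (lt_mem_nhds huy),
    (hψ.continuousAt hnhds).eventually (lt_mem_nhds hψy)] with y' hy' huy' hψy'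
  exact hlog huy' hψy' (hmax ⟨subset_closure hy', by linarith⟩)

theorem rpow_mul_le (h : IsDirichletSolution ι K u Ω) (hψ : ContinuousOn ψ Ω) (hα : 0 < α)
    (hA : 0 ≤ A) {Q : ℝ} (hQ : 0 ≤ Q) (hx : x ∈ Ω)
    (hmax : ∀ ε > 0, ∀ y ∈ Ω, 0 < -u y - ε → 0 < ψ y → IsLocalMax (logTest u ψ ε α A x) y →
      (-u y - ε) ^ α * ψ y ≤ Q) :
    (-u x) ^ α * ψ x ≤ Q * Real.exp (A / 2 * K.d ^ 2) := by
  have hux : 0 < -u x := neg_pos.mpr (h.neg hx)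
  rcases le_or_gt (ψ x) 0 with hψx | hψx
  · exact (mul_nonpos_of_nonneg_of_nonpos (by positivity) hψx).trans (by positivity)
  have hε {ε : ℝ} (hε : 0 < ε) (hεx : 0 < -u x - ε) :
      (-u x - ε) ^ α * ψ x ≤ Q * Real.exp (A / 2 * K.d ^ 2) := by
    obtain ⟨y, hy, huy, hψy, hlocal, hle⟩ :=
      h.exists_isLocalMax_logTest (A := A) (z := x) hψ hα hε hx hεx hψx
    rw [← Real.exp_le_exp, exp_logTest hεx hψx, exp_logTest huy hψy] at hle
    calc (-u x - ε) ^ α * ψ x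
        ≤ (-u y - ε) ^ α * ψ y * Real.exp (A / 2 * ‖y - x‖ ^ 2) := by simpa using hle
      _ ≤ Q * Real.exp (A / 2 * K.d ^ 2) := by
          gcongr
          · exact hmax ε hε y hy huy hψy hlocal
          · exact h.norm_sub_le (subset_closure hy) (subset_closure hx)
  have hlim : Tendsto (fun ε ↦ (-u x - ε) ^ α * ψ x) (𝓝[>] 0) (𝓝 ((-u x) ^ α * ψ x)) := by
    have : ContinuousAt (fun ε ↦ (-u x - ε) ^ α * ψ x) 0 :=
      ((continuousAt_const.sub continuousAt_id).rpow_const (.inr hα.le)).mul_const _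
    simpa using this.tendsto.mono_left nhdsWithin_le_nhds
  refine le_of_tendsto hlim ?_
  filter_upwards [Ioo_mem_nhdsGT hux] with ε ⟨hpos, hlt⟩ using hε hpos (sub_pos.mpr hlt)

end IsDirichletSolution

end WeightedMaximum

section GradientAlgebra

variable {α A d : ℝ}

theorem half_mul_le_of_lt_abs {g lam R z : ℝ} (hg : 0 ≤ g) (hA : 0 ≤ A) (hz : |z| ≤ d)
    (hcrit : lam * R = g * (α * R - A * z)) (hR : 2 * (A * d) < α * |R|) :
    α / 2 * g ≤ lam := by
  have hd : 0 ≤ d := (abs_nonneg z).trans hz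
  have hR0 : R ≠ 0 := by
    rintro rfl
    simp only [abs_zero, mul_zero] at hR
    exact hR.not_ge (by positivity)
  have hzR : A * z * R ≤ α / 2 * R ^ 2 :=
    calc A * z * R ≤ |A * z * R| := le_abs_self _
      _ = A * |z| * |R| := by rw [abs_mul, abs_mul, abs_of_nonneg hA]
      _ ≤ A * d * |R| := by gcongr
      _ ≤ α / 2 * |R| * |R| := mul_le_mul_of_nonneg_right (by linarith) (abs_nonneg R)
      _ = α / 2 * R ^ 2 := by rw [← sq_abs R]; ring
  refine le_of_mul_le_mul_right ?_ (by positivity : 0 < R ^ 2)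
  calc α / 2 * g * R ^ 2 ≤ α / 2 * g * R ^ 2 + g * (α / 2 * R ^ 2 - A * z * R) :=
        le_add_of_nonneg_right (mul_nonneg hg (sub_nonneg.mpr hzR))
    _ = lam * R * R := by rw [hcrit]; ring
    _ = lam * R ^ 2 := by ring

theorem sq_sub_add_le_of_abs_le {R z : ℝ} (hα : 1 ≤ α) (hA : 0 < A) (hAd : 28 * A * d ^ 2 ≤ 1)
    (hz : |z| ≤ d) (hR : α * |R| ≤ 2 * (A * d)) :
    (α * R - A * z) ^ 2 + α * R ^ 2 ≤ A / 2 := by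
  have hα₀ : 0 < α := one_pos.trans_le hα
  have hsub : |α * R - A * z| ≤ 3 * (A * d) :=
    calc |α * R - A * z| ≤ |α * R| + |A * z| := abs_sub _ _
      _ = α * |R| + A * |z| := by rw [abs_mul, abs_mul, abs_of_pos hα₀, abs_of_pos hA]
      _ ≤ 2 * (A * d) + A * d := by gcongr
      _ = 3 * (A * d) := by ring
  calc (α * R - A * z) ^ 2 + α * R ^ 2 ≤ |α * R - A * z| ^ 2 + (α * |R|) ^ 2 := by
        rw [sq_abs, mul_pow, sq_abs]
        gcongr
        nlinarith
    _ ≤ (3 * (A * d)) ^ 2 + (2 * (A * d)) ^ 2 := by gcongr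
    _ = 13 * A * d ^ 2 * A := by ring
    _ ≤ A / 2 := by nlinarith

theorem sq_sub_add_le_of_lt_abs {R z : ℝ} (hα : 0 ≤ α) (hA : 0 ≤ A) (hz : |z| ≤ d)
    (hR : 2 * (A * d) < α * |R|) :
    (α * R - A * z) ^ 2 + α * R ^ 2 ≤ α / 2 * (5 * α + 2) * R ^ 2 := by
  have hsub : |α * R - A * z| ≤ 3 / 2 * (α * |R|) :=
    calc |α * R - A * z| ≤ |α * R| + |A * z| := abs_sub _ _
      _ = α * |R| + A * |z| := by rw [abs_mul, abs_mul, abs_of_nonneg hα, abs_of_nonneg hA]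
      _ ≤ α * |R| + A * d := by gcongr
      _ ≤ 3 / 2 * (α * |R|) := by linarith
  calc (α * R - A * z) ^ 2 + α * R ^ 2 = |α * R - A * z| ^ 2 + α * |R| ^ 2 := by
        rw [sq_abs, sq_abs]
    _ ≤ (3 / 2 * (α * |R|)) ^ 2 + α * |R| ^ 2 := by gcongr
    _ = (9 / 4 * α ^ 2 + α) * R ^ 2 := by rw [mul_pow, mul_pow, sq_abs]; ring
    _ ≤ α / 2 * (5 * α + 2) * R ^ 2 := by gcongr; nlinarith

theorem mul_sq_sub_add_le {D₁ D₂ F lam R z g : ℝ} (hα : 1 ≤ α) (hA : 0 < A)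
    (hAd : 28 * A * d ^ 2 ≤ 1) (hF : 0 ≤ F) (hg : 0 ≤ g) (hD₂ : 0 ≤ D₂) (hz : |z| ≤ d)
    (hlarge : D₁ < α / 2 * g) (hD : D₁ < lam → F * lam ≤ D₂)
    (hcrit : lam * R = g * (α * R - A * z)) :
    F * ((α * R - A * z) ^ 2 + α * R ^ 2) * g ≤ F * (A / 2) * g + (5 * α + 2) * D₂ * R ^ 2 := by
  have hα₀ : 0 < α := one_pos.trans_le hα
  rcases le_or_gt (α * |R|) (2 * (A * d)) with hR | hR
  · refine le_add_of_le_of_nonneg ?_ (by positivity)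
    gcongr
    exact sq_sub_add_le_of_abs_le hα hA hAd hz hR
  · have hlam : α / 2 * g ≤ lam := half_mul_le_of_lt_abs hg hA.le hz hcrit hR
    refine le_add_of_nonneg_of_le (by positivity) ?_
    calc F * ((α * R - A * z) ^ 2 + α * R ^ 2) * g
        ≤ F * (α / 2 * (5 * α + 2) * R ^ 2) * g := by
          gcongr
          exact sq_sub_add_le_of_lt_abs hα₀.le hA.le hz hR
      _ = (5 * α + 2) * (F * (α / 2 * g)) * R ^ 2 := by ring
      _ ≤ (5 * α + 2) * (F * lam) * R ^ 2 := by gcongr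
      _ ≤ (5 * α + 2) * D₂ * R ^ 2 := by
          gcongr
          exact hD (hlarge.trans_le hlam)

variable {ι : Type*} [Fintype ι] {η : ℝ} {F lam R z : ι → ℝ}

theorem mul_sum_le_of_gradient_conditions {D₁ D₂ : ℝ} (hα : 1 ≤ α) (hA : 0 < A)
    (hAd : 28 * A * d ^ 2 ≤ 1) (hη : 0 < η) (hF : ∀ i, 0 ≤ F i) (hD₁ : 0 ≤ D₁) (hD₂ : 0 ≤ D₂)
    (hz : ∀ i, |z i| ≤ d) (hlarge : D₁ < α / 2 * (η * ∑ i, R i ^ 2))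
    (hD : ∀ i, D₁ < lam i → F i * lam i ≤ D₂)
    (hcrit : ∀ i, lam i * R i = η * (∑ j, R j ^ 2) * (α * R i - A * z i))
    (hmain : A * ∑ i, F i ≤ ∑ i, F i * ((α * R i - A * z i) ^ 2 + α * R i ^ 2) + α / η) :
    η * ∑ i, F i ≤ 2 * (α + (5 * α + 2) * D₂) / A := by
  set G : ℝ := ∑ i, R i ^ 2
  have hηG : 0 < η * G := pos_of_mul_pos_right (hD₁.trans_lt hlarge) (by linarith)
  have hsum : ∑ i, F i * ((α * R i - A * z i) ^ 2 + α * R i ^ 2) ≤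
      A / 2 * ∑ i, F i + (5 * α + 2) * D₂ / η := by
    refine le_of_mul_le_mul_right ?_ hηG
    calc (∑ i, F i * ((α * R i - A * z i) ^ 2 + α * R i ^ 2)) * (η * G)
        ≤ ∑ i, (F i * (A / 2) * (η * G) + (5 * α + 2) * D₂ * R i ^ 2) := by
          rw [Finset.sum_mul]
          exact Finset.sum_le_sum fun i _ ↦ mul_sq_sub_add_le hα hA hAd (hF i) hηG.le hD₂ (hz i)
            hlarge (hD i) (hcrit i)
      _ = (∑ i, F i) * (A / 2) * (η * G) + (5 * α + 2) * D₂ * G := by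
          rw [Finset.sum_add_distrib, ← Finset.mul_sum, Finset.sum_mul, Finset.sum_mul]
      _ = (A / 2 * ∑ i, F i + (5 * α + 2) * D₂ / η) * (η * G) := by field_simp
  have hhalf : A / 2 * ∑ i, F i ≤ (α + (5 * α + 2) * D₂) / η := by
    rw [add_div]
    linarith
  rw [le_div_iff₀ hη] at hhalf
  rw [le_div_iff₀ hA]
  linarith

theorem sum_sq_le_or_of_gradient_conditions {D₁ D₂ : ℝ} (hα : 1 ≤ α) (hA : 0 < A)
    (hAd : 28 * A * d ^ 2 ≤ 1) (hη : 0 < η) (hF : ∀ i, 0 ≤ F i) (hD₁ : 0 ≤ D₁) (hD₂ : 0 ≤ D₂)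
    (hz : ∀ i, |z i| ≤ d) (hD : ∀ i, D₁ < lam i → F i * lam i ≤ D₂)
    (hcrit : ∀ i, lam i * R i = η * (∑ j, R j ^ 2) * (α * R i - A * z i))
    (hmain : A * ∑ i, F i ≤ ∑ i, F i * ((α * R i - A * z i) ^ 2 + α * R i ^ 2) + α / η) :
    ∑ i, R i ^ 2 ≤ Fintype.card ι * (2 * (A * d)) ^ 2 ∨ η * ∑ i, R i ^ 2 ≤ 2 * D₁ ∨
      ∃ i, D₁ < lam i ∧ η * ∑ i, R i ^ 2 ≤ 2 * lam i ∧
        η * ∑ i, F i ≤ 2 * (α + (5 * α + 2) * D₂) / A := by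
  have hg : 0 ≤ η * ∑ i, R i ^ 2 := by positivity
  have hhalf : η * ∑ i, R i ^ 2 ≤ 2 * (α / 2 * (η * ∑ i, R i ^ 2)) := by nlinarith
  by_cases hsmall : ∀ i, α * |R i| ≤ 2 * (A * d)
  · refine .inl ?_
    calc ∑ i, R i ^ 2 ≤ ∑ _ : ι, (2 * (A * d)) ^ 2 := by
          refine Finset.sum_le_sum fun i _ ↦ ?_
          rw [← sq_abs]
          gcongr
          exact (le_mul_of_one_le_left (abs_nonneg _) hα).trans (hsmall i)
      _ = Fintype.card ι * (2 * (A * d)) ^ 2 := by simp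
  push Not at hsmall
  obtain ⟨i, hi⟩ := hsmall
  have hlam : α / 2 * (η * ∑ i, R i ^ 2) ≤ lam i :=
    half_mul_le_of_lt_abs hg hA.le (hz i) (hcrit i) hi
  refine .inr ?_
  rcases le_or_gt (α / 2 * (η * ∑ i, R i ^ 2)) D₁ with hle | hlarge
  · exact .inl (by linarith)
  · exact .inr ⟨i, hlarge.trans_le hlam, by linarith,
      mul_sum_le_of_gradient_conditions hα hA hAd hη hF hD₁ hD₂ hz hlarge hD hcrit hmain⟩

variable (ι) in
theorem exists_rpow_mul_sum_sq_le (K : StructureConstants) (hA : 0 < A)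
    (hAd : 28 * A * K.d ^ 2 ≤ 1) : ∃ C, ∀ (F lam R z : ι → ℝ) (η : ℝ),
    0 < η → η ≤ K.d ^ 2 / K.c₀ → (∀ i, 0 ≤ F i) → CoefficientBounds K F lam →
    (∀ i, |z i| ≤ K.d) →
    (∀ i, lam i * R i = η * (∑ j, R j ^ 2) * ((K.N + 1) * R i - A * z i)) →
    A * ∑ i, F i ≤ ∑ i, F i * (((K.N + 1) * R i - A * z i) ^ 2 + (K.N + 1) * R i ^ 2) +
      (K.N + 1) / η →
    η ^ (K.N + 1) * ∑ i, R i ^ 2 ≤ C := by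
  have hN := K.N_pos
  have hd := K.d_pos
  have hc₀ := K.c₀_pos
  have hM := K.M_pos
  set α : ℝ := K.N + 1
  have hα : 1 ≤ α := by linarith
  set B : ℝ := K.d ^ 2 / K.c₀
  set κ : ℝ := 2 * (α + (5 * α + 2) * K.D₂) / A
  refine ⟨max (B ^ α * (Fintype.card ι * (2 * (A * K.d)) ^ 2))
    (max (B ^ K.N * (2 * K.D₁)) (2 * (K.M * κ ^ K.N))), ?_⟩
  intro F lam R z η hη hηB hF hK hz hcrit hmain
  have hsplit : η ^ α * ∑ i, R i ^ 2 = η ^ K.N * (η * ∑ i, R i ^ 2) := by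
    rw [Real.rpow_add_one hη.ne', mul_assoc]
  rcases sum_sq_le_or_of_gradient_conditions hα hA hAd hη hF K.D₁_pos.le K.D₂_pos.le hz hK.mul_le
    hcrit hmain with hG | hG | ⟨i, hi, hG, hS⟩
  · refine le_max_of_le_left ?_
    gcongr
  · refine le_max_of_le_right (le_max_of_le_left ?_)
    rw [hsplit]
    gcongr
  · refine le_max_of_le_right (le_max_of_le_right ?_)
    have hF_sum : 0 ≤ ∑ i, F i := Finset.sum_nonneg fun i _ ↦ hF i
    calc η ^ α * ∑ i, R i ^ 2 ≤ η ^ K.N * (2 * (K.M * (∑ j, F j) ^ K.N)) := by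
          rw [hsplit]
          have := hG.trans (mul_le_mul_of_nonneg_left (hK.le_rpow i hi) zero_le_two)
          gcongr
      _ = 2 * (K.M * (η * ∑ j, F j) ^ K.N) := by
          rw [Real.mul_rpow hη.le hF_sum]
          ring
      _ ≤ 2 * (K.M * κ ^ K.N) := by gcongr

end GradientAlgebra

section GradientBound

variable {E : Type*} [NormedAddCommGroup E] [InnerProductSpace ℝ E] {ι : Type*} [Fintype ι]

theorem exists_norm_eq_one_forall_apply_eq [CompleteSpace E] {L : E →L[ℝ] ℝ} (hL : L ≠ 0) :
    ∃ w : E, ‖w‖ = 1 ∧ ∀ v, L v = ‖L‖ * ⟪w, v⟫ := by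
  have hL' : ‖L‖ ≠ 0 := norm_ne_zero_iff.mpr hL
  refine ⟨‖L‖⁻¹ • (InnerProductSpace.toDual ℝ E).symm L, ?_, fun v ↦ ?_⟩
  · simp [norm_smul, hL']
  · simp [real_inner_smul_left, hL']

theorem norm_fderiv_sq_eq_mul_sum (e : OrthonormalBasis ι ℝ E) (u : E → ℝ) (y : E) {η : ℝ}
    (hη : η ≠ 0) : ‖fderiv ℝ u y‖ ^ 2 = η ^ 2 * ∑ i, (∂[e i] u y / η) ^ 2 := by
  simp [e.norm_dual, Finset.mul_sum, ← mul_pow, mul_div_cancel₀ _ hη, dirDeriv]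

namespace IsLinearizationAt

variable [CompleteSpace E] {u : E → ℝ} {Ω : Set E} {x y : E} {e : OrthonormalBasis ι ℝ E}
  {F lam : ι → ℝ} {ε α A : ℝ}

theorem gradient_conditions (hΩ : IsOpen Ω) (hu : ContDiffOn ℝ 4 u Ω) (hy : y ∈ Ω)
    (h : IsLinearizationAt u Ω y e F lam) (hη : 0 < -u y - ε) (hg : 0 < ‖fderiv ℝ u y‖)
    (hmax : IsLocalMax (logTest u (fun y ↦ ‖fderiv ℝ u y‖) ε α A x) y) {R : ι → ℝ}
    (hR : ∀ i, R i = ∂[e i] u y / (-u y - ε)) :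
    ‖fderiv ℝ u y‖ ^ 2 = (-u y - ε) ^ 2 * ∑ i, R i ^ 2 ∧
    (∀ i, lam i * R i = (-u y - ε) * (∑ j, R j ^ 2) * (α * R i - A * ⟪y - x, e i⟫)) ∧
    A * ∑ i, F i ≤ ∑ i, F i * ((α * R i - A * ⟪y - x, e i⟫) ^ 2 + α * R i ^ 2) +
      α / (-u y - ε) := by
  obtain ⟨w, hw, hgw⟩ := exists_norm_eq_one_forall_apply_eq (norm_pos_iff.mp hg)
  have hu₂ : ContDiffOn ℝ 2 u Ω := hu.of_le (by norm_num)
  have hb : ContDiffOn ℝ 2 (∂[w] u) Ω := contDiffOn_dirDeriv hΩ hu (by norm_num) w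
  have hby : ∂[w] u y = ‖fderiv ℝ u y‖ := by simp [dirDeriv, hgw, hw]
  have hmax_w : IsLocalMax (logTest u (∂[w] u) ε α A x) y := by
    refine isLocalMax_logTest_of_le hmax (hb.continuousOn.continuousAt (hΩ.mem_nhds hy)) hby hg
      (.of_forall fun z ↦ ?_)
    exact (le_abs_self _).trans ((fderiv ℝ u z).unit_le_opNorm w hw.le)
  rw [← hby] at hg
  have hR_eq (i : ι) : (-u y - ε) * R i = ‖fderiv ℝ u y‖ * ⟪w, e i⟫ := by
    rw [hR, ← hgw, mul_div_cancel₀ _ hη.ne', dirDeriv]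
  have hnorm : ‖fderiv ℝ u y‖ ^ 2 = (-u y - ε) ^ 2 * ∑ i, R i ^ 2 := by
    simpa only [hR] using norm_fderiv_sq_eq_mul_sum e u y hη.ne'
  have hfirst (i : ι) : ∂[e i] (∂[w] u) y / ∂[w] u y = α * R i - A * ⟪y - x, e i⟫ := by
    rw [hR]
    exact (dirDeriv_conditions_of_isLocalMax_logTest hΩ hu₂ hb hy hη hg hmax_w
      (e.norm_eq_one i)).1
  refine ⟨hnorm, fun i ↦ ?_, ?_⟩
  · have hi : ∂[e i] (∂[w] u) y = lam i * ⟪w, e i⟫ := by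
      rw [dirDeriv_dirDeriv_eq_fderiv_fderiv hΩ hu₂ hy, ← hess, h.hess_apply, real_inner_comm]
    have hi' := hfirst i
    rw [hi, hby, div_eq_iff (hby ▸ hg.ne')] at hi'
    refine mul_left_cancel₀ hη.ne' ?_
    linear_combination lam i * hR_eq i + ‖fderiv ℝ u y‖ * hi' +
      (α * R i - A * ⟪y - x, e i⟫) * hnorm
  · have hsum := h.sum_conditions_of_isLocalMax_logTest hΩ hu₂ hy hb hη hg hmax_w
    rw [h.sum_mul_dirDeriv₃_eq_zero hΩ hu hy, zero_div, zero_add] at hsum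
    simpa only [hfirst, hR] using hsum

end IsLinearizationAt

variable (ι E) in
theorem exists_rpow_mul_norm_fderiv_le [ProperSpace E] (K : StructureConstants) :
    ∃ C, 0 ≤ C ∧ ∀ (Ω : Set E) (u : E → ℝ), IsDirichletSolution ι K u Ω → ∀ x ∈ Ω,
      (-u x) ^ (K.N + 1) * ‖fderiv ℝ u x‖ ≤ C := by
  have hd := K.d_pos
  have hc₀ := K.c₀_pos
  have hN := K.N_pos
  set A : ℝ := (28 * K.d ^ 2)⁻¹
  have hA : 0 < A := by positivity
  have hAd : 28 * A * K.d ^ 2 ≤ 1 := by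
    rw [mul_right_comm, mul_inv_cancel₀ (by positivity)]
  obtain ⟨C, hbound⟩ := exists_rpow_mul_sum_sq_le ι K hA hAd
  set B : ℝ := K.d ^ 2 / K.c₀
  refine ⟨√(B ^ (K.N + 1 + 2) * C) * Real.exp (A / 2 * K.d ^ 2), by positivity, ?_⟩
  intro Ω u h x hx
  have hgrad : ContinuousOn (fun y ↦ ‖fderiv ℝ u y‖) Ω :=
    (h.contDiffOn.continuousOn_fderiv_of_isOpen h.isOpen (by norm_num)).norm
  refine h.rpow_mul_le hgrad (by positivity) hA.le (by positivity) hx fun ε hε y hy hη hg hmax ↦ ?_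
  obtain ⟨e, F, lam, hlin, hK⟩ := h.exists_isLinearizationAt y hy
  obtain ⟨hnorm, hcrit, hmain⟩ :=
    hlin.gradient_conditions h.isOpen h.contDiffOn hy hη hg hmax fun _ ↦ rfl
  set η : ℝ := -u y - ε
  have hηB : η ≤ B := by linarith [h.neg_le_sq_div hy]
  have hz (i : ι) : |⟪y - x, e i⟫| ≤ K.d :=
    h.abs_inner_sub_le (subset_closure hy) (subset_closure hx) (e.norm_eq_one i)
  refine Real.le_sqrt_of_sq_le ?_
  calc (η ^ (K.N + 1) * ‖fderiv ℝ u y‖) ^ 2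
      = η ^ (K.N + 1 + 2) * (η ^ (K.N + 1) * ∑ i, (∂[e i] u y / η) ^ 2) := by
        rw [mul_pow, hnorm, Real.rpow_add hη (K.N + 1) 2, Real.rpow_two]
        ring
    _ ≤ B ^ (K.N + 1 + 2) * C := by
        have := hbound F lam _ _ η hη hηB (fun i ↦ (hlin.pos i).le) hK hz hcrit hmain
        gcongr

end GradientBound

section HessianAlgebra

variable {β A d : ℝ}

theorem sq_mul_le_div_four {z : ℝ} (hA : 0 < A) (hAd : 4 * A * d ^ 2 ≤ 1) (hz : |z| ≤ d) :
    (A * z) ^ 2 ≤ A / 4 := by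
  have hz2 : z ^ 2 ≤ d ^ 2 := sq_le_sq' (abs_le.mp hz).1 (abs_le.mp hz).2
  calc (A * z) ^ 2 = A * (A * z ^ 2) := by ring
    _ ≤ A * (A * d ^ 2) := by gcongr
    _ ≤ A / 4 := by nlinarith

theorem mul_sq_add_le_of_four_mul_le {F Fₚ l Λ lam R z P : ℝ} (hβ : 8 ≤ β) (hA : 0 < A)
    (hAd : 4 * A * d ^ 2 ≤ 1) (hF : 0 ≤ F) (hl : 0 < l) (hΛ : 5 * Λ ≤ l) (hlam : -Λ ≤ lam)
    (hz : |z| ≤ d) (hP : P = β * R - A * z) (hFₚ : 4 * Fₚ ≤ F) :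
    F * (P ^ 2 + β * R ^ 2) ≤ (F - Fₚ) * (4 * (5 / 6 * P) * (l * P) -
      2 * (l - lam) * (5 / 6 * P) ^ 2) / l + F * (A / 2) := by
  have hAz := sq_mul_le_div_four hA hAd hz
  have hβR : β * R ^ 2 ≤ P ^ 2 / 4 + A / 2 := by
    calc β * R ^ 2 ≤ β / 8 * (β * R ^ 2) := le_mul_of_one_le_left (by positivity) (by linarith)
      _ = (P + A * z) ^ 2 / 8 := by rw [hP]; ring
      _ ≤ P ^ 2 / 4 + A / 2 := by linarith [add_sq_le (a := P) (b := A * z)]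
  have hquad : 5 / 3 * l * P ^ 2 ≤
      4 * (5 / 6 * P) * (l * P) - 2 * (l - lam) * (5 / 6 * P) ^ 2 := by
    nlinarith [mul_nonneg (by linarith : 0 ≤ l / 5 + lam) (sq_nonneg P)]
  calc F * (P ^ 2 + β * R ^ 2) ≤ F * (P ^ 2 + (P ^ 2 / 4 + A / 2)) := by gcongr
    _ = 3 / 4 * F * (5 / 3 * l * P ^ 2) / l + F * (A / 2) := by field_simp; ring
    _ ≤ _ := by
      gcongr
      · linarith
      · linarith

theorem mul_sq_add_le_of_le_four_mul {D₂ F Fₚ l R z P : ℝ} (hβ : 0 ≤ β) (hA : 0 < A)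
    (hAd : 4 * A * d ^ 2 ≤ 1) (hF : 0 ≤ F) (hl : 0 < l) (hD : Fₚ * l ≤ D₂) (hz : |z| ≤ d)
    (hP : P = β * R - A * z) (hFₚ : F ≤ 4 * Fₚ) :
    F * (P ^ 2 + β * R ^ 2) ≤ 4 * D₂ * (2 * β ^ 2 + β) / l * R ^ 2 + F * (A / 2) := by
  have hAz := sq_mul_le_div_four hA hAd hz
  have hP2 : P ^ 2 + β * R ^ 2 ≤ (2 * β ^ 2 + β) * R ^ 2 + A / 2 := by
    rw [hP]
    linarith [sq_nonneg (β * R + A * z)]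
  have hF_le : F ≤ 4 * D₂ / l := by
    rw [le_div_iff₀ hl]
    nlinarith
  calc F * (P ^ 2 + β * R ^ 2) ≤ F * ((2 * β ^ 2 + β) * R ^ 2) + F * (A / 2) := by
        rw [← mul_add]
        gcongr
    _ ≤ 4 * D₂ / l * ((2 * β ^ 2 + β) * R ^ 2) + F * (A / 2) := by gcongr
    _ = _ := by ring

variable {ι : Type*} [Fintype ι] {D₂ Λ l X η : ℝ} {F lam R z P : ι → ℝ} {p : ι}

theorem half_mul_sum_le_of_hessian_conditions (hβ : 8 ≤ β) (hA : 0 < A)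
    (hAd : 4 * A * d ^ 2 ≤ 1) (hF : ∀ i, 0 < F i) (hl : 0 < l) (hΛ : 5 * Λ ≤ l)
    (hlam : ∀ i, -Λ ≤ lam i) (hD : F p * l ≤ D₂) (hz : ∀ i, |z i| ≤ d)
    (hP : ∀ i, P i = β * R i - A * z i)
    (hconcave : ∀ w : ι → ℝ, w p = 0 →
      ∑ i, (F i - F p) * (4 * w i * (l * P i) - 2 * (l - lam i) * w i ^ 2) ≤ X)
    (hmain : X / l + A * ∑ i, F i ≤ ∑ i, F i * (P i ^ 2 + β * R i ^ 2) + β / η) :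
    A / 2 * ∑ i, F i ≤ β / η + 4 * D₂ * (2 * β ^ 2 + β) / l * ∑ i, R i ^ 2 := by
  classical
  set w : ι → ℝ := fun i ↦ if 4 * F p ≤ F i then 5 / 6 * P i else 0
  set κ : ℝ := 4 * D₂ * (2 * β ^ 2 + β) / l
  have hκ : 0 ≤ κ := by
    have hD₂ : 0 ≤ D₂ := (mul_pos (hF p) hl).le.trans hD
    have : 0 ≤ β := by linarith
    positivity
  have hterm (i : ι) : F i * (P i ^ 2 + β * R i ^ 2) ≤
      (F i - F p) * (4 * w i * (l * P i) - 2 * (l - lam i) * w i ^ 2) / l + κ * R i ^ 2 +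
        F i * (A / 2) := by
    by_cases hi : 4 * F p ≤ F i
    · have := mul_sq_add_le_of_four_mul_le hβ hA hAd (hF i).le hl hΛ (hlam i) (hz i) (hP i) hi
      simp only [w, if_pos hi]
      nlinarith [mul_nonneg hκ (sq_nonneg (R i))]
    · have := mul_sq_add_le_of_le_four_mul (by linarith) hA hAd (hF i).le hl hD (hz i) (hP i)
        (not_le.mp hi).le
      simpa [w, if_neg hi] using this
  have hsum : ∑ i, F i * (P i ^ 2 + β * R i ^ 2) ≤
      X / l + κ * ∑ i, R i ^ 2 + A / 2 * ∑ i, F i := by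
    calc ∑ i, F i * (P i ^ 2 + β * R i ^ 2)
        ≤ (∑ i, (F i - F p) * (4 * w i * (l * P i) - 2 * (l - lam i) * w i ^ 2)) / l +
            κ * ∑ i, R i ^ 2 + A / 2 * ∑ i, F i := by
          rw [Finset.sum_div, Finset.mul_sum, mul_comm (A / 2), Finset.sum_mul,
            ← Finset.sum_add_distrib, ← Finset.sum_add_distrib]
          exact Finset.sum_le_sum fun i _ ↦ hterm i
      _ ≤ _ := by
          gcongr
          refine hconcave w (if_neg ?_)
          linarith [hF p]
  linarith

theorem le_or_of_hessian_conditions {c₀ : ℝ} (hA : 0 < A) (hη : 0 < η) (hl : 0 < l)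
    (hc₀ : c₀ ≤ ∑ i, F i) (hc : 0 < c₀) {κ : ℝ}
    (hhalf : A / 2 * ∑ i, F i ≤ β / η + κ / l * ∑ i, R i ^ 2) :
    η * ∑ i, F i ≤ 4 * β / A ∨ l ≤ 4 * κ / (A * c₀) * ∑ i, R i ^ 2 := by
  rcases le_total (A / 4 * ∑ i, F i) (β / η) with hle | hle
  · left
    rw [le_div_iff₀ hη] at hle
    rw [le_div_iff₀ hA]
    linarith
  · right
    have hS : A / 4 * ∑ i, F i ≤ κ * (∑ i, R i ^ 2) / l := by
      rw [← div_mul_eq_mul_div]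
      linarith
    rw [le_div_iff₀ hl] at hS
    rw [div_mul_eq_mul_div, le_div_iff₀ (by positivity)]
    linarith [mul_le_mul_of_nonneg_left hc₀ (mul_pos hA hl).le]

end HessianAlgebra

section HessianBound

variable {E : Type*} [NormedAddCommGroup E] [InnerProductSpace ℝ E] {ι : Type*} [Fintype ι]

theorem apply_self_le_norm (B : E →L[ℝ] E →L[ℝ] ℝ) {v : E} (hv : ‖v‖ = 1) : B v v ≤ ‖B‖ := by
  simpa [hv] using (le_abs_self _).trans (B.le_opNorm₂ v v)

namespace IsLinearizationAt

variable {u : E → ℝ} {Ω : Set E} {x y : E} {e : OrthonormalBasis ι ℝ E} {F lam : ι → ℝ}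
  {ε β A : ℝ}

theorem le_norm_hess (h : IsLinearizationAt u Ω y e F lam) (i : ι) : lam i ≤ ‖hess u y‖ :=
  calc lam i = hess u y (e i) (e i) := by simp [h.hess_apply]
    _ ≤ ‖hess u y‖ := apply_self_le_norm _ (e.norm_eq_one i)

theorem exists_eq_norm_hess (h : IsLinearizationAt u Ω y e F lam) {Λ : ℝ}
    (hlam : ∀ i, -Λ ≤ lam i) (hΛ : Λ < ‖hess u y‖) : ∃ p, lam p = ‖hess u y‖ := by
  have : Nonempty ι := by
    by_contra! hempty
    simpa using h.euler
  obtain ⟨p, hp⟩ := exists_norm_le_abs_of_eigenframe h.hess_apply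
  refine ⟨p, (h.le_norm_hess p).antisymm ?_⟩
  rcases abs_choice (lam p) with habs | habs
  · rwa [← habs]
  · linarith [hlam p]

theorem hessian_conditions [CompleteSpace E] (hΩ : IsOpen Ω) (hu : ContDiffOn ℝ 4 u Ω) (hy : y ∈ Ω)
    (h : IsLinearizationAt u Ω y e F lam) (hη : 0 < -u y - ε) {p : ι} (hp : 0 < lam p)
    (hnorm : lam p = ‖hess u y‖)
    (hmax : IsLocalMax (logTest u (fun y ↦ ‖hess u y‖) ε β A x) y) {R P : ι → ℝ}
    (hR : ∀ i, R i = ∂[e i] u y / (-u y - ε))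
    (hP : ∀ i, P i = β * R i - A * ⟪y - x, e i⟫) :
    ∃ X, X / lam p + A * ∑ i, F i ≤
        ∑ i, F i * (P i ^ 2 + β * R i ^ 2) + β / (-u y - ε) ∧
      ∀ w : ι → ℝ, w p = 0 →
        ∑ i, (F i - F p) * (4 * w i * (lam p * P i) - 2 * (lam p - lam i) * w i ^ 2) ≤ X := by
  set b : E → ℝ := ∂[e p] (∂[e p] u)
  have hu₂ : ContDiffOn ℝ 2 u Ω := hu.of_le (by norm_num)
  have hb : ContDiffOn ℝ 2 b Ω :=
    contDiffOn_dirDeriv hΩ (contDiffOn_dirDeriv (m := 3) hΩ hu (by norm_num) _) (by norm_num) _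
  have hby : b y = lam p := h.dirDeriv_dirDeriv_self hΩ hu₂ hy p
  have hb_le : ∀ᶠ z in 𝓝 y, b z ≤ ‖hess u z‖ := by
    filter_upwards [hΩ.mem_nhds hy] with z hz
    calc b z = hess u z (e p) (e p) := dirDeriv_dirDeriv_eq_fderiv_fderiv hΩ hu₂ hz _ _
      _ ≤ ‖hess u z‖ := apply_self_le_norm _ (e.norm_eq_one p)
  have hmax_b : IsLocalMax (logTest u b ε β A x) y :=
    isLocalMax_logTest_of_le hmax (hb.continuousOn.continuousAt (hΩ.mem_nhds hy))
      (hby.trans hnorm) (hnorm ▸ hp) hb_le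
  have hfirst (i : ι) : ∂[e i] b y / lam p = P i := by
    rw [hP, hR, ← hby]
    exact (dirDeriv_conditions_of_isLocalMax_logTest hΩ hu₂ hb hy hη (hby ▸ hp) hmax_b
      (e.norm_eq_one i)).1
  refine ⟨∑ i, F i * ∂[e i] (∂[e i] b) y, ?_, fun w hw ↦ ?_⟩
  · have hsum := h.sum_conditions_of_isLocalMax_logTest hΩ hu₂ hy hb hη (hby ▸ hp) hmax_b
    simpa only [hby, hfirst, hR] using hsum
  · have hfirst' (i : ι) : lam p * P i = ∂[e i] b y := by
      rw [← hfirst, mul_div_cancel₀ _ hp.ne']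
    simpa only [hfirst'] using h.le_sum_mul_dirDeriv₄ hΩ hu hy p hw (e p)

end IsLinearizationAt

theorem IsDirichletSolution.le_or_of_isLocalMax_hess [ProperSpace E] {K : StructureConstants}
    {u : E → ℝ} {Ω : Set E} {x y : E} {ε β A : ℝ} (h : IsDirichletSolution ι K u Ω)
    (hβ : 8 ≤ β) (hA : 0 < A) (hAd : 4 * A * K.d ^ 2 ≤ 1) (hx : x ∈ Ω) (hy : y ∈ Ω)
    (hη : 0 < -u y - ε)
    (hmax : IsLocalMax (logTest u (fun y ↦ ‖hess u y‖) ε β A x) y) :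
    ‖hess u y‖ ≤ 5 * K.Λ + K.D₁ ∨ ‖hess u y‖ ≤ K.M * (4 * β / A / (-u y - ε)) ^ K.N ∨
      ‖hess u y‖ * (-u y - ε) ^ 2 ≤
        4 * (4 * K.D₂ * (2 * β ^ 2 + β)) / (A * K.c₀) * ‖fderiv ℝ u y‖ ^ 2 := by
  have hc₀ := K.c₀_pos
  have hD₁ := K.D₁_pos
  have hM := K.M_pos
  have hΛ := K.Λ_nonneg
  refine or_iff_not_imp_left.mpr fun hlarge ↦ ?_
  obtain ⟨e, F, lam, hlin, hK⟩ := h.exists_isLinearizationAt y hy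
  obtain ⟨p, hp⟩ := hlin.exists_eq_norm_hess hK.neg_le (by linarith)
  obtain ⟨X, hmain, hconcave⟩ := hlin.hessian_conditions h.isOpen h.contDiffOn hy hη
    (by linarith) hp hmax (fun _ ↦ rfl) fun _ ↦ rfl
  have hz (i : ι) : |⟪y - x, e i⟫| ≤ K.d :=
    h.abs_inner_sub_le (subset_closure hy) (subset_closure hx) (e.norm_eq_one i)
  have hhalf := half_mul_sum_le_of_hessian_conditions hβ hA hAd hlin.pos (by linarith)
    (by linarith) hK.neg_le (hK.mul_le p (by linarith)) hz (fun _ ↦ rfl) hconcave hmain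
  rw [← hp]
  refine (le_or_of_hessian_conditions hA hη (by linarith) hK.le_sum hc₀ hhalf).imp
    (fun hS ↦ ?_) fun hl ↦ ?_
  · refine (hK.le_rpow p (by linarith)).trans ?_
    have hS₀ : 0 ≤ ∑ i, F i := hc₀.le.trans hK.le_sum
    gcongr
    · exact K.N_pos.le
    · rwa [le_div_iff₀' hη]
  · rw [norm_fderiv_sq_eq_mul_sum e u y hη.ne', mul_left_comm, mul_comm (lam p)]
    gcongr

theorem rpow_mul_le_of_le_or {N L M S κ G B g η ψ : ℝ} (hN : 0 < N) (hL : 0 ≤ L) (hM : 0 ≤ M)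
    (hS : 0 ≤ S) (hκ : 0 ≤ κ) (hg : 0 ≤ g) (hη : 0 < η) (hηB : η ≤ B)
    (hgG : η ^ (N + 1) * g ≤ G)
    (hψ : ψ ≤ L ∨ ψ ≤ M * (S / η) ^ N ∨ ψ * η ^ 2 ≤ κ * g ^ 2) :
    η ^ (2 * N + 8) * ψ ≤
      B ^ (2 * N + 8) * L + B ^ (N + 8) * (M * S ^ N) + κ * B ^ (4 : ℝ) * G ^ 2 := by
  have hB : 0 < B := hη.trans_le hηB
  have hL' : 0 ≤ B ^ (2 * N + 8) * L := by positivity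
  have hM' : 0 ≤ B ^ (N + 8) * (M * S ^ N) := by positivity
  have hκ' : 0 ≤ κ * B ^ (4 : ℝ) * G ^ 2 := by positivity
  rcases hψ with hψ | hψ | hψ
  · calc η ^ (2 * N + 8) * ψ ≤ η ^ (2 * N + 8) * L := by gcongr
      _ ≤ B ^ (2 * N + 8) * L := by gcongr
      _ ≤ _ := by linarith
  · calc η ^ (2 * N + 8) * ψ ≤ η ^ (N + (N + 8)) * (M * (S / η) ^ N) := by
          rw [← add_assoc, ← two_mul]
          gcongr
      _ = η ^ (N + 8) * (M * S ^ N) := by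
          rw [Real.div_rpow hS hη.le, Real.rpow_add hη]
          field_simp
      _ ≤ B ^ (N + 8) * (M * S ^ N) := by gcongr
      _ ≤ _ := by linarith
  · calc η ^ (2 * N + 8) * ψ = η ^ (4 + (N + 1) + (N + 1)) * (ψ * η ^ 2) := by
          rw [← Real.rpow_two, mul_left_comm, ← Real.rpow_add hη, mul_comm]
          ring_nf
      _ ≤ η ^ (4 + (N + 1) + (N + 1)) * (κ * g ^ 2) := by gcongr
      _ = κ * η ^ (4 : ℝ) * (η ^ (N + 1) * g) ^ 2 := by
          rw [Real.rpow_add hη, Real.rpow_add hη]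
          ring
      _ ≤ κ * B ^ (4 : ℝ) * G ^ 2 := by gcongr
      _ ≤ _ := by linarith

variable (ι E) in
theorem exists_rpow_mul_norm_hess_le [ProperSpace E] (K : StructureConstants) :
    ∃ C, 0 ≤ C ∧ ∀ (Ω : Set E) (u : E → ℝ), IsDirichletSolution ι K u Ω → ∀ x ∈ Ω,
      (-u x) ^ (2 * K.N + 8) * ‖hess u x‖ ≤ C := by
  have hd := K.d_pos
  have hc₀ := K.c₀_pos
  have hN := K.N_pos
  have hD₁ := K.D₁_pos
  have hD₂ := K.D₂_pos
  have hM := K.M_pos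
  have hΛ := K.Λ_nonneg
  obtain ⟨G, -, hgrad⟩ := exists_rpow_mul_norm_fderiv_le E ι K
  set A : ℝ := (4 * K.d ^ 2)⁻¹
  set β : ℝ := 2 * K.N + 8
  set B : ℝ := K.d ^ 2 / K.c₀
  set κ : ℝ := 4 * (4 * K.D₂ * (2 * β ^ 2 + β)) / (A * K.c₀)
  have hA : 0 < A := by positivity
  have hAd : 4 * A * K.d ^ 2 ≤ 1 := by
    rw [mul_right_comm, mul_inv_cancel₀ (by positivity)]
  set Q : ℝ := B ^ β * (5 * K.Λ + K.D₁) + B ^ (K.N + 8) * (K.M * (4 * β / A) ^ K.N) +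
    κ * B ^ (4 : ℝ) * G ^ 2
  refine ⟨Q * Real.exp (A / 2 * K.d ^ 2), by positivity, fun Ω u h x hx ↦ ?_⟩
  have hhess : ContinuousOn (fun y ↦ ‖hess u y‖) Ω :=
    ContinuousOn.norm (E := E →L[ℝ] E →L[ℝ] ℝ)
      (contDiffOn_hess (m := 0) h.isOpen h.contDiffOn (by norm_num)).continuousOn
  refine h.rpow_mul_le hhess (by positivity) hA.le (by positivity) hx
    fun ε hε y hy hη _ hmax ↦ ?_
  have hηu : -u y - ε ≤ -u y := by linarith
  have hGy : (-u y - ε) ^ (K.N + 1) * ‖fderiv ℝ u y‖ ≤ G :=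
    le_trans (by gcongr) (hgrad Ω u h y hy)
  exact rpow_mul_le_of_le_or hN (by positivity) hM.le (by positivity) (by positivity)
    (norm_nonneg _) hη (hηu.trans (h.neg_le_sq_div hy)) hGy
    (h.le_or_of_isLocalMax_hess (by linarith) hA hAd hx hy hη hmax)

end HessianBound

section Estimate

theorem ConditionN.le_mul_rpow_sum {n : ℕ} {Γ : Set (Fin n → ℝ)} {f : (Fin n → ℝ) → ℝ}
    {N₁ N₂ D₂ : ℝ} {lam : Fin n → ℝ} (hN : ConditionN Γ f N₁ N₂) (hN₁ : 0 < N₁) (hlam : lam ∈ Γ)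
    (hf : f lam = 1) (hsum : 0 < ∑ j, fpd f j lam) {i : Fin n} (hi : 0 ≤ lam i)
    (hD : fpd f i lam * lam i ≤ D₂) : lam i ≤ D₂ * N₁ * (∑ j, fpd f j lam) ^ N₂ := by
  have hle := hN lam hlam hf _ hsum le_rfl i
  rw [div_le_iff₀ (by positivity)] at hle
  calc lam i ≤ fpd f i lam * (N₁ * (∑ j, fpd f j lam) ^ N₂) * lam i :=
        le_mul_of_one_le_left hi hle
    _ = fpd f i lam * lam i * (N₁ * (∑ j, fpd f j lam) ^ N₂) := by ring
    _ ≤ D₂ * (N₁ * (∑ j, fpd f j lam) ^ N₂) := by gcongr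
    _ = D₂ * N₁ * (∑ j, fpd f j lam) ^ N₂ := by ring

theorem norm_iteratedFDeriv_two {E : Type*} [NormedAddCommGroup E] [NormedSpace ℝ E] (u : E → ℝ)
    (x : E) : ‖iteratedFDeriv ℝ 2 u x‖ = ‖hess u x‖ := by
  rw [← norm_iteratedFDeriv_fderiv, norm_iteratedFDeriv_one, hess]

theorem norm_gradient {E : Type*} [NormedAddCommGroup E] [InnerProductSpace ℝ E] [CompleteSpace E]
    (u : E → ℝ) (x : E) : ‖gradient u x‖ = ‖fderiv ℝ u x‖ :=
  (InnerProductSpace.toDual ℝ E).symm.norm_map _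

theorem exists_add_rpow_mul_le (E ι : Type*) [NormedAddCommGroup E] [InnerProductSpace ℝ E]
    [ProperSpace E] [Fintype ι] (K : StructureConstants) :
    ∃ C, 0 < C ∧ ∀ (Ω : Set E) (u : E → ℝ), IsDirichletSolution ι K u Ω → ∀ x ∈ Ω,
      -u x + (-u x) ^ (K.N + 1) * ‖gradient u x‖ +
        (-u x) ^ (2 * K.N + 8) * ‖iteratedFDeriv ℝ 2 u x‖ ≤ C := by
  obtain ⟨C₁, hC₁, hgrad⟩ := exists_rpow_mul_norm_fderiv_le E ι K
  obtain ⟨C₂, hC₂, hhess⟩ := exists_rpow_mul_norm_hess_le E ι K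
  have hd := K.d_pos
  have hc₀ := K.c₀_pos
  refine ⟨K.d ^ 2 / K.c₀ + C₁ + C₂, by positivity, fun Ω u h x hx ↦ ?_⟩
  rw [norm_gradient, norm_iteratedFDeriv_two]
  exact add_le_add_three (h.neg_le_sq_div hx) (hgrad Ω u h x hx) (hhess Ω u h x hx)

variable {n : ℕ} {Γ : Set (Fin n → ℝ)} {f : (Fin n → ℝ) → ℝ} {N₁ N₂ D₁ D₂ : ℝ}

theorem IsConcaveEllipticHessianOp.exists_structureConstants (hf : IsConcaveEllipticHessianOp Γ f)
    (hΓ : IsConvexInvariantCone Γ) (hone : (fun _ ↦ 1) ∈ Γ) (hN₁ : 0 < N₁) (hN₂ : 0 < N₂)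
    (hN : ConditionN Γ f N₁ N₂) (hD₁ : 0 < D₁) (hD₂ : 0 < D₂) {d : ℝ} (hd : 0 < d) :
    ∃ K : StructureConstants, K.N = N₂ ∧ K.d = d ∧ ∀ lam ∈ Γ, f lam = 1 →
      (∀ i, D₁ < lam i → fpd f i lam * lam i ≤ D₂) →
      CoefficientBounds K (fun i ↦ fpd f i lam) lam := by
  have hc₀ : 0 < f fun _ ↦ 1 := hf.2.2.2.2.1 _ hone
  refine ⟨⟨f fun _ ↦ 1, D₁, D₂, D₂ * N₁, N₂, n * (n * D₂ / (f fun _ ↦ 1) + D₁), d, hc₀, hD₁, hD₂,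
    by positivity, hN₂, by positivity, hd⟩, rfl, rfl, fun lam hlam heq hD ↦ ?_⟩
  have hsum : (f fun _ ↦ 1) ≤ ∑ i, fpd f i lam := by simpa using hf.le_sum_fpd_mul hΓ hlam hone
  refine ⟨hsum, hD, fun i hi ↦ ?_, fun i ↦ ?_⟩
  · exact hN.le_mul_rpow_sum hN₁ hlam heq (hc₀.trans_le hsum) (hD₁.trans hi).le (hD i hi)
  · have heuler : 0 ≤ ∑ i, fpd f i lam * lam i := by simp [hf.sum_fpd_mul_self hΓ hlam, heq]
    simpa using neg_le_of_antivary (hf.2.2.2.1 lam hlam) (hf.antivary_fpd hΓ hlam) heuler hc₀ hsum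
      hD₁.le hD₂.le hD i

theorem main_interior_estimate_general (hΓ : IsConvexInvariantCone Γ)
    (hf : IsConcaveEllipticHessianOp Γ f) (hN₁ : 0 < N₁) (hN₂ : 0 < N₂)
    (hN : ConditionN Γ f N₁ N₂) (hD₁ : 0 < D₁) (hD₂ : 0 < D₂) {d : ℝ} (hd : 0 < d) :
    ∃ C : ℝ, 0 < C ∧
      ∀ (Ω : Set (EuclideanSpace ℝ (Fin n))) (u : EuclideanSpace ℝ (Fin n) → ℝ),
        IsOpen Ω → Bornology.IsBounded Ω → Metric.diam Ω ≤ d →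
        ContDiffOn ℝ 4 u Ω → ContinuousOn u (closure Ω) →
        (∀ x ∈ Ω, hessEigen u x ∈ Γ) →
        (∀ x ∈ Ω, f (hessEigen u x) = 1) →
        (∀ x ∈ frontier Ω, u x = 0) →
        ConditionD f u Ω D₁ D₂ →
        ∀ x ∈ Ω, -u x + (-u x) ^ (N₂ + 1) * ‖gradient u x‖ +
          (-u x) ^ (2 * N₂ + 8) * ‖iteratedFDeriv ℝ 2 u x‖ ≤ C := by
  by_cases hone : (fun _ ↦ 1) ∈ Γ
  swap
  · exact ⟨1, one_pos, fun _ _ _ _ _ _ _ hmem _ _ _ x hx ↦ (hone (hΓ.one_mem (hmem x hx))).elim⟩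
  obtain ⟨K, rfl, rfl, hK⟩ := hf.exists_structureConstants hΓ hone hN₁ hN₂ hN hD₁ hD₂ hd
  obtain ⟨C, hC, hbound⟩ := exists_add_rpow_mul_le (EuclideanSpace ℝ (Fin n)) (Fin n) K
  refine ⟨C, hC, fun Ω u hΩ hbdd hdiam hu hcont hmem heq hzero hD ↦ hbound Ω u ?_⟩
  refine ⟨hΩ, hbdd, hdiam, hu, hcont, hzero, fun y hy ↦ ?_⟩
  obtain ⟨e, he⟩ := exists_isLinearizationAt hΓ hf hΩ (hu.of_le (by norm_num)) hmem heq hy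
  exact ⟨e, _, _, he, hK _ (hmem y hy) (heq y hy) (hD y hy)⟩

end Estimate

/-- **Theorem (main estimate).** For a concave elliptic Hessian operator `f` on a convex
invariant cone `Γ` satisfying condition N, and any solution `u` of the Dirichlet problem
`F(D²u) = 1` in `Ω`, `u = 0` on `∂Ω`, satisfying condition D, one has
`sup_Ω ((−u) + (−u)^α |Du| + (−u)^β |D²u|) ≤ C` with `α, β, C` depending only on
`f`, `N₁`, `N₂`, `D₁`, `D₂` and `diam(Ω)`. -/
theorem main_interior_estimate (n : ℕ) (hn : 2 ≤ n)
    (Γ : Set (Fin n → ℝ)) (f : (Fin n → ℝ) → ℝ)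
    (hΓ : IsConvexInvariantCone Γ) (hf : IsConcaveEllipticHessianOp Γ f)
    (N₁ N₂ : ℝ) (hN₁ : 0 < N₁) (hN₂ : 0 < N₂) (hN : ConditionN Γ f N₁ N₂)
    (D₁ D₂ : ℝ) (hD₁ : 0 < D₁) (hD₂ : 0 < D₂)
    (d : ℝ) (hd : 0 < d) :
    ∃ α β C : ℝ, 0 < α ∧ 0 < β ∧ 0 < C ∧
      ∀ (Ω : Set (EuclideanSpace ℝ (Fin n))) (u : EuclideanSpace ℝ (Fin n) → ℝ),
        IsOpen Ω → IsConnected Ω → Bornology.IsBounded Ω → Metric.diam Ω ≤ d →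
        ContDiffOn ℝ (⊤ : ℕ∞) u Ω → ContinuousOn u (closure Ω) →
        (∀ x ∈ Ω, hessEigen u x ∈ Γ) →
        (∀ x ∈ Ω, f (hessEigen u x) = 1) →
        (∀ x ∈ frontier Ω, u x = 0) →
        ConditionD f u Ω D₁ D₂ →
        ∀ x ∈ Ω,
          (-u x) + (-u x) ^ α * ‖gradient u x‖ + (-u x) ^ β * ‖iteratedFDeriv ℝ 2 u x‖ ≤ C := by
  obtain ⟨C, hC, hbound⟩ := main_interior_estimate_general hΓ hf hN₁ hN₂ hN hD₁ hD₂ hd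
  exact ⟨N₂ + 1, 2 * N₂ + 8, C, by positivity, by positivity, hC,
    fun Ω u hΩ _ hbdd hdiam hu ↦ hbound Ω u hΩ hbdd hdiam (contDiffOn_infty.mp hu 4)⟩
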